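/- arXiv:1408.2137 — 5 statements merged into one kernel-verified Lean document; each statement's English description precedes it below -/
import Mathlib

section
/- Assume that X is a subspace of the Cantor set 2^ω that is h-homogeneously embedded in 2^ω and countably controlled. Then X is countable dense homogeneous. -/
/-- `X` is h-homogeneously embedded in `Z` if there is a π-base `ℬ` for `Z`
consisting of (non-empty) clopen sets, together with homeomorphisms
`φ_U : Z → U` for `U ∈ ℬ` such that `φ_U[X] = X ∩ U`. -/
def HHomEmbedded {Z : Type*} [TopologicalSpace Z] (X : Set Z) : Prop :=
  ∃ ℬ : Set (Set Z),
    (∀ U ∈ ℬ, IsClopen U ∧ U.Nonempty) ∧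
    (∀ V : Set Z, IsOpen V → V.Nonempty → ∃ U ∈ ℬ, U ⊆ V) ∧
    (∀ U ∈ ℬ, ∃ φ : Z ≃ₜ U, Subtype.val '' (⇑φ '' X) = X ∩ U)
/-- A space `X` is countably controlled if every countable subset of `X` is
contained in a Polish subspace of `X`. -/
def CountablyControlled (X : Type*) [TopologicalSpace X] : Prop :=
  ∀ D : Set X, D.Countable → ∃ G : Set X, D ⊆ G ∧ PolishSpace G
/-- A space is countable dense homogeneous (CDH) if for every pair of countable
dense subsets `A`, `B` there is a homeomorphism of the space onto itself
mapping `A` onto `B`. -/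
def IsCDH (X : Type*) [TopologicalSpace X] : Prop :=
  ∀ A B : Set X, A.Countable → Dense A → B.Countable → Dense B →
    ∃ h : X ≃ₜ X, h '' A = B

/-!
Let `A` and `B` be countable dense subsets of `X`, pushed into the Cantor space `Z`. It is enough to
find a homeomorphism `H` of `Z` such that every `x` matches `H x`: one lies in `X` exactly if the
other does, and `x ∈ A` exactly if `H x ∈ B`.

Small copies `φ_U : Z → U` of the pair `(Z, X)` for `U` in a countable π-base, together with
countable control, give a Polish, hence `Gδ`, set `G ⊆ X` containing `A ∪ B` and all
`φ_U ⁻¹' (A ∪ B)`. Points of `G` outside `A` match points of `G` outside `B` automatically, so only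
`Gᶜ ∪ A` and, for the inverse, `Gᶜ ∪ B` need attention. These are countable unions of singletons
and of closed nowhere dense sets `C ⊆ Gᶜ`, and each such `C` can be moved into any clopen set
correctly: `φ_U` preserves `X` and maps no point of `C` into `A ∪ B`, and since `C` is nowhere dense
its restriction to `C` extends to a homeomorphism between any two non-empty clopen sets.

A back-and-forth construction treats these closed sets one at a time. A homeomorphism which is
already correct on a closed set `K` is altered on clopen pieces of `Kᶜ` that shrink towards `K`; the
alterations can be made arbitrarily small, so that the homeomorphisms converge.
-/

open Set Filter Topology Function

section ClopenGluing

variable {X Y : Type*} [TopologicalSpace X] [TopologicalSpace Y]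

open Classical in
/-- The decomposition of a space into a clopen set and its complement. -/
noncomputable def sumComplHomeomorph {s : Set X} (hs : IsClopen s) : s ⊕ (sᶜ : Set X) ≃ₜ X :=
  (Equiv.Set.sumCompl s).toHomeomorphOfContinuousOpen
    (continuous_subtype_val.sumElim continuous_subtype_val)
    (hs.isOpen.isOpenMap_subtype_val.sumElim hs.compl.isOpen.isOpenMap_subtype_val)

theorem exists_homeomorph_extending {s : Set X} {t : Set Y} (hs : IsClopen s) (ht : IsClopen t)
    (e : s ≃ₜ t) (e' : (sᶜ : Set X) ≃ₜ (tᶜ : Set Y)) : ∃ g : X ≃ₜ Y, ∀ x : s, g x = e x :=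
  ⟨(sumComplHomeomorph hs).symm.trans <| (e.sumCongr e').trans (sumComplHomeomorph ht), fun x =>
    congrArg (fun z => sumComplHomeomorph ht (e.sumCongr e' z))
      ((sumComplHomeomorph hs).symm_apply_apply (Sum.inl x))⟩

end ClopenGluing

section CantorSpace

theorem exists_cylinder_subset_of_isCompact {E : ℕ → Type*} [∀ n, TopologicalSpace (E n)]
    [∀ n, DiscreteTopology (E n)] {K U : Set (∀ n, E n)} (hK : IsCompact K) (hU : IsOpen U)
    (hKU : K ⊆ U) : ∃ n, ∀ x ∈ K, PiNat.cylinder x n ⊆ U := by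
  let := PiNat.metricSpace (E := E)
  obtain ⟨δ, hδ, hsub⟩ := hK.exists_thickening_subset_open hU hKU
  obtain ⟨n, hn⟩ := exists_pow_lt_of_lt_one hδ one_half_lt_one
  exact ⟨n, fun x hx y hy => hsub <| Metric.mem_thickening_iff.2
    ⟨x, hx, (PiNat.mem_cylinder_iff_dist_le.1 hy).trans_lt hn⟩⟩

/-- A Cantor space is a topological copy of `2^ω`. -/
def IsCantorSpace (X : Type*) [TopologicalSpace X] : Prop :=
  Nonempty (X ≃ₜ (ℕ → Bool))

namespace IsCantorSpace

variable {X Y : Type*} [TopologicalSpace X] [TopologicalSpace Y]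

theorem of_homeomorph (hY : IsCantorSpace Y) (e : X ≃ₜ Y) : IsCantorSpace X :=
  hY.map e.trans

theorem nonempty_homeomorph (hX : IsCantorSpace X) (hY : IsCantorSpace Y) : Nonempty (X ≃ₜ Y) :=
  hX.elim fun e => hY.map fun e' => e.trans e'.symm

theorem compactSpace (hX : IsCantorSpace X) : CompactSpace X :=
  hX.elim fun e => e.symm.compactSpace

theorem metrizableSpace (hX : IsCantorSpace X) : TopologicalSpace.MetrizableSpace X :=
  hX.elim fun e => e.isEmbedding.metrizableSpace

theorem totallyDisconnectedSpace (hX : IsCantorSpace X) : TotallyDisconnectedSpace X :=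
  hX.elim fun e => e.symm.totallyDisconnectedSpace

theorem pi_bool (ι : Type*) [Countable ι] [Infinite ι] : IsCantorSpace (ι → Bool) :=
  have ⟨e⟩ := nonempty_equiv_of_countable (α := ι) (β := ℕ)
  ⟨Homeomorph.piCongrLeft (Y := fun _ => Bool) e⟩

theorem bool_prod (hX : IsCantorSpace X) : IsCantorSpace (Bool × X) := by
  obtain ⟨e⟩ := hX
  have : Infinite {n : ℕ // n ≠ 0} := (finite_singleton 0).infinite_compl.to_subtype
  obtain ⟨e'⟩ := pi_bool {n : ℕ // n ≠ 0}
  exact ⟨((Homeomorph.refl Bool).prodCongr (e.trans e'.symm)).trans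
    (Homeomorph.funSplitAt Bool 0).symm⟩

theorem sum (hX : IsCantorSpace X) (hY : IsCantorSpace Y) : IsCantorSpace (X ⊕ Y) := by
  obtain ⟨e⟩ := hX.nonempty_homeomorph hY
  let twoCopies : Bool × Y ≃ₜ Y ⊕ Y :=
    (Equiv.boolEquivPUnitSumPUnit.{0, 0}.toHomeomorphOfDiscrete.prodCongr (.refl Y)).trans <|
      Homeomorph.sumProdDistrib.trans <| (Homeomorph.punitProd Y).sumCongr (.punitProd Y)
  exact hY.bool_prod.of_homeomorph ((e.sumCongr (.refl Y)).trans twoCopies.symm)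

theorem fin_succ_prod (hX : IsCantorSpace X) (n : ℕ) : IsCantorSpace (Fin (n + 1) × X) := by
  induction n with
  | zero => exact hX.of_homeomorph (.uniqueProd (Fin 1) X)
  | succ n ih =>
    let split : Fin (n + 1 + 1) ≃ₜ Fin (n + 1) ⊕ Fin 1 :=
      finSumFinEquiv.symm.toHomeomorphOfDiscrete
    exact (ih.sum hX).of_homeomorph <| (split.prodCongr (.refl X)).trans <|
      Homeomorph.sumProdDistrib.trans <|
        (Homeomorph.refl _).sumCongr (.uniqueProd (Fin 1) X)

theorem finite_prod (F : Type*) [Finite F] [Nonempty F] [TopologicalSpace F] [DiscreteTopology F]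
    (hX : IsCantorSpace X) : IsCantorSpace (F × X) := by
  obtain ⟨n, ⟨e⟩⟩ := Finite.exists_equiv_fin F
  obtain ⟨m, rfl⟩ := Nat.exists_eq_succ_of_ne_zero fun hn : n = 0 =>
    (hn ▸ e (Classical.arbitrary F)).elim0
  exact (hX.fin_succ_prod m).of_homeomorph (e.toHomeomorphOfDiscrete.prodCongr (.refl X))

theorem exists_homeomorph_apply_eq (hX : IsCantorSpace X) (hY : IsCantorSpace Y) (x : X) (y : Y) :
    ∃ e : X ≃ₜ Y, e x = y := by
  obtain ⟨f⟩ := hX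
  obtain ⟨g⟩ := hY
  let translation : (ℕ → Bool) ≃ₜ (ℕ → Bool) :=
    .piCongrRight fun n => (Equiv.swap (f x n) (g y n)).toHomeomorphOfDiscrete
  have translation_apply : translation (f x) = g y := funext fun n => Equiv.swap_apply_left _ _
  exact ⟨(f.trans translation).trans g.symm, by simp [translation_apply]⟩

theorem pi_bool_subtype_of_isClopen {S : Set (ℕ → Bool)} (hS : IsClopen S) (hne : S.Nonempty) :
    IsCantorSpace S := by
  obtain ⟨n, hn⟩ :=
    exists_cylinder_subset_of_isCompact hS.isClosed.isCompact hS.isOpen Subset.rfl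
  let e := Homeomorph.piEquivPiSubtypeProd (fun i : ℕ => i < n) fun _ => Bool
  let F : Set ({i // i < n} → Bool) := Prod.fst '' (e '' S)
  have image_eq : e '' S = F ×ˢ univ := by
    refine Subset.antisymm (fun z hz => ⟨mem_image_of_mem _ hz, mem_univ _⟩) ?_
    rintro z ⟨⟨_, ⟨x, hx, rfl⟩, hxz⟩, -⟩
    refine ⟨e.symm z, hn x hx fun i hi => ?_, e.apply_symm_apply z⟩
    exact congrFun (hxz.trans (congrArg Prod.fst (e.apply_symm_apply z)).symm).symm ⟨i, hi⟩
  have : Nonempty F := ((hne.image e).image _).to_subtype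
  have : Infinite {i // ¬ i < n} := (finite_lt_nat n).infinite_compl.to_subtype
  exact ((pi_bool {i // ¬ i < n}).finite_prod F).of_homeomorph <|
    (e.image S).trans <| (Homeomorph.setCongr image_eq).trans <|
      (Homeomorph.Set.prod F univ).trans <| (Homeomorph.refl F).prodCongr (Homeomorph.Set.univ _)

theorem subtype_of_isClopen (hX : IsCantorSpace X) {s : Set X} (hs : IsClopen s)
    (hne : s.Nonempty) : IsCantorSpace s := by
  obtain ⟨e⟩ := hX
  have hes : IsClopen (e '' s) := ⟨e.isClosedMap s hs.isClosed, e.isOpenMap s hs.isOpen⟩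
  exact (pi_bool_subtype_of_isClopen hes (hne.image e)).of_homeomorph (e.image s)

theorem exists_homeomorph_eqOn_compl (hX : IsCantorSpace X) (hY : IsCantorSpace Y) {f : X → Y}
    (hf : IsOpenEmbedding f) {N : Set X} (hN : IsClopen N) (hne : N.Nonempty) :
    ∃ e : X ≃ₜ Y, EqOn e f Nᶜ := by
  have := hX.compactSpace
  have := hY.metrizableSpace
  have hfN : IsClopen (f '' Nᶜ) :=
    ⟨hf.continuous.isClosedMap _ hN.compl.isClosed, hf.isOpenMap _ hN.compl.isOpen⟩
  have hne' : (f '' Nᶜ)ᶜ.Nonempty :=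
    (hne.image f).mono fun _ => by
      rintro ⟨x, hx, rfl⟩ ⟨y, hy, hyx⟩
      exact hy (hf.injective hyx ▸ hx)
  obtain ⟨e'⟩ := (hX.subtype_of_isClopen hN.compl.compl (by rwa [compl_compl])).nonempty_homeomorph
    (hY.subtype_of_isClopen hfN.compl hne')
  obtain ⟨e, he⟩ := exists_homeomorph_extending hN.compl hfN
    (hf.isEmbedding.homeomorphImage Nᶜ) e'
  exact ⟨e, fun x hx => he ⟨x, hx⟩⟩

end IsCantorSpace

end CantorSpace

section WhitneyFamilies

theorem exists_disjoint_clopen_refinement {X : Type*} [TopologicalSpace X]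
    [SecondCountableTopology X] {U : Set X} {P : Set X → Prop} (empty : P ∅)
    (mono : ∀ ⦃V W⦄, V ⊆ W → P W → P V)
    (locally_small : ∀ x ∈ U, ∃ V, IsClopen V ∧ x ∈ V ∧ V ⊆ U ∧ P V) :
    ∃ D : ℕ → Set X, (∀ i, IsClopen (D i)) ∧ Pairwise (Disjoint on D) ∧ ⋃ i, D i = U ∧
      ∀ i, P (D i) := by
  choose! V hV hxV hVU hPV using locally_small
  obtain ⟨T, hT, hTU⟩ := TopologicalSpace.isOpen_iUnion_countable (fun x : U => V x)
    fun x => (hV x x.2).isOpen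
  obtain ⟨f, hf⟩ := ((hT.image fun x : U => V x).insert ∅).exists_eq_range (insert_nonempty _ _)
  have hfP : ∀ n, IsClopen (f n) ∧ P (f n) := fun n => by
    obtain h | ⟨x, -, h⟩ := hf.symm ▸ mem_range_self (f := f) n
    · exact h ▸ ⟨isClopen_empty, empty⟩
    · exact h ▸ ⟨hV x x.2, hPV x x.2⟩
  have iUnion_f : ⋃ n, f n = U := by
    rw [← sUnion_range, ← hf, sUnion_insert, empty_union, sUnion_image, hTU]
    exact Subset.antisymm (iUnion_subset fun x => hVU x x.2) fun x hx =>
      mem_iUnion.2 ⟨⟨x, hx⟩, hxV x hx⟩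
  exact ⟨disjointed f, fun n => disjointedRec (fun _ i ht => ht.diff (hfP i).1) (hfP n).1,
    disjoint_disjointed f, iUnion_disjointed.trans iUnion_f,
    fun n => mono (disjointed_subset f n) (hfP n).2⟩

/-- A disjoint family of open sets whose members are no larger than their distance to the
complement of the union, as in Whitney's decomposition of an open set. Maps permuting the points
of each member glue continuously with the identity off the union. -/
structure IsWhitneyFamily {ι Z : Type*} [PseudoMetricSpace Z] (D : ι → Set Z) : Prop where
  isOpen : ∀ i, IsOpen (D i)
  disjoint : Pairwise (Disjoint on D)
  dist_le : ∀ ⦃i x y z⦄, x ∈ D i → y ∈ D i → z ∉ ⋃ j, D j → dist x y ≤ dist x z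

theorem exists_isWhitneyFamily {Z : Type*} [MetricSpace Z] [CompactSpace Z]
    [TotallyDisconnectedSpace Z] {U : Set Z} (hU : IsOpen U) {ε : ℝ} (hε : 0 < ε) :
    ∃ D : ℕ → Set Z, IsWhitneyFamily D ∧ (∀ i, IsClopen (D i)) ∧ ⋃ i, D i = U ∧
      ∀ i, ∀ x ∈ D i, ∀ y ∈ D i, dist x y ≤ ε := by
  obtain ⟨D, hD, hdisj, rfl, hsmall⟩ := exists_disjoint_clopen_refinement (U := U)
    (P := fun V => ∀ x ∈ V, ∀ y ∈ V, dist x y ≤ ε ∧ ∀ z ∉ U, dist x y ≤ dist x z)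
    (fun _ h => h.elim) (fun V W hVW hW x hx y hy => hW x (hVW hx) y (hVW hy)) fun p hp => by
      obtain ⟨δ, hδ, hball⟩ := Metric.isOpen_iff.1 hU p hp
      let r := min (δ / 3) (ε / 2)
      have hrδ : r ≤ δ / 3 := min_le_left _ _
      have hrε : r ≤ ε / 2 := min_le_right _ _
      obtain ⟨V, hV, hpV, hVr⟩ := compact_exists_isClopen_in_isOpen (Metric.isOpen_ball (x := p))
        (Metric.mem_ball_self (show 0 < r by positivity))
      refine ⟨V, hV, hpV, hVr.trans <| (Metric.ball_subset_ball (by linarith)).trans hball,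
        fun x hx y hy => ?_⟩
      have hxp := Metric.mem_ball.1 (hVr hx)
      have hxy := dist_triangle_right x y p
      have hyp := Metric.mem_ball.1 (hVr hy)
      refine ⟨by linarith, fun z hz => ?_⟩
      have hzp : δ ≤ dist z p := not_lt.1 fun h => hz (hball h)
      linarith [dist_triangle_left z p x]
  exact ⟨D, ⟨fun i => (hD i).isOpen, hdisj, fun i x y z hx hy => (hsmall i x hx y hy).2 z⟩, hD, rfl,
    fun i x hx y hy => (hsmall i x hx y hy).1⟩

section GlueMap

variable {ι Z : Type*} {D : ι → Set Z} {f g : ∀ i, D i → D i}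

open Classical in
/-- The map acting as `f i` on `D i` and fixing the points outside all the `D i`; it is meant for
disjoint `D`, where no choice of `i` is involved. -/
noncomputable def glueMap (D : ι → Set Z) (f : ∀ i, D i → D i) (x : Z) : Z :=
  if h : ∃ i, x ∈ D i then f h.choose ⟨x, h.choose_spec⟩ else x

theorem glueMap_of_notMem {x : Z} (hx : x ∉ ⋃ i, D i) : glueMap D f x = x :=
  dif_neg (mt mem_iUnion.2 hx)

theorem glueMap_coe (hD : Pairwise (Disjoint on D)) {i : ι} (x : D i) :
    glueMap D f x = f i x := by
  have independent : ∀ j (hj : x.1 ∈ D j), (f j ⟨x, hj⟩ : Z) = f i x := fun j hj => by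
    obtain rfl := hD.eq (not_disjoint_iff.2 ⟨x, hj, x.2⟩)
    rfl
  exact (dif_pos ⟨i, x.2⟩).trans (independent _ _)

theorem leftInverse_glueMap (hD : Pairwise (Disjoint on D)) (h : ∀ i, LeftInverse (g i) (f i)) :
    LeftInverse (glueMap D g) (glueMap D f) := fun x => by
  by_cases hx : x ∈ ⋃ i, D i
  · obtain ⟨i, hi⟩ := mem_iUnion.1 hx
    lift x to D i using hi
    rw [glueMap_coe hD, glueMap_coe hD, h i x]
  · rw [glueMap_of_notMem hx, glueMap_of_notMem hx]

namespace IsWhitneyFamily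

variable [PseudoMetricSpace Z]

theorem dist_glueMap_le (hD : IsWhitneyFamily D) {x : Z} (hx : x ∉ ⋃ i, D i) (y : Z) :
    dist (glueMap D f y) x ≤ 2 * dist y x := by
  by_cases hy : y ∈ ⋃ i, D i
  · obtain ⟨i, hi⟩ := mem_iUnion.1 hy
    lift y to D i using hi
    rw [glueMap_coe hD.disjoint]
    linarith [hD.dist_le y.2 (f i y).2 hx, dist_triangle_left (f i y : Z) x y]
  · rw [glueMap_of_notMem hy]
    linarith [dist_nonneg (x := y) (y := x)]

theorem continuous_glueMap (hD : IsWhitneyFamily D) (hf : ∀ i, Continuous (f i)) :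
    Continuous (glueMap D f) := by
  refine continuous_iff_continuousAt.2 fun x => ?_
  by_cases hx : x ∈ ⋃ i, D i
  · obtain ⟨i, hi⟩ := mem_iUnion.1 hx
    have : ContinuousOn (glueMap D f) (D i) := by
      rw [continuousOn_iff_continuous_domRestrict]
      exact (continuous_subtype_val.comp (hf i)).congr fun y => (glueMap_coe hD.disjoint y).symm
    exact this.continuousAt ((hD.isOpen i).mem_nhds hi)
  · rw [ContinuousAt, glueMap_of_notMem hx, tendsto_iff_dist_tendsto_zero]
    refine squeeze_zero (fun _ => dist_nonneg) (hD.dist_glueMap_le hx) ?_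
    have : Continuous fun y => 2 * dist y x := by fun_prop
    simpa only [dist_self, mul_zero] using this.tendsto x

theorem exists_homeomorph (hD : IsWhitneyFamily D) (e : ∀ i, D i ≃ₜ D i) :
    ∃ σ : Z ≃ₜ Z, (∀ i (x : D i), σ x = e i x) ∧ EqOn σ id (⋃ i, D i)ᶜ :=
  ⟨{ toFun := glueMap D fun i => e i
     invFun := glueMap D fun i => (e i).symm
     left_inv := leftInverse_glueMap hD.disjoint fun i => (e i).left_inv
     right_inv := leftInverse_glueMap hD.disjoint fun i => (e i).right_inv
     continuous_toFun := hD.continuous_glueMap fun i => (e i).continuous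
     continuous_invFun := hD.continuous_glueMap fun i => (e i).symm.continuous },
    fun _ => glueMap_coe (f := fun i => e i) hD.disjoint,
    fun _ hx => glueMap_of_notMem (f := fun i => e i) hx⟩

end IsWhitneyFamily

end GlueMap

end WhitneyFamilies

section LocallyRealizable

/-- Every non-empty clopen set can be mapped onto every other one so that the relation `R` holds
between each point of `T` and its image. -/
def LocallyRealizable {Z : Type*} [TopologicalSpace Z] (R : Z → Z → Prop) (T : Set Z) : Prop :=
  ∀ ⦃V W : Set Z⦄, IsClopen V → V.Nonempty → IsClopen W → W.Nonempty →
    ∃ e : V ≃ₜ W, ∀ x : V, x.1 ∈ T → R x (e x)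

variable {Z : Type*} [MetricSpace Z] [CompactSpace Z] [TotallyDisconnectedSpace Z]
  {R : Z → Z → Prop} {T : Set Z}

theorem LocallyRealizable.exists_small_correction (hT : LocallyRealizable R T) (h : Z ≃ₜ Z)
    {K : Set Z} (hK : IsClosed K) {ε : ℝ} (hε : 0 < ε) :
    ∃ σ : Z ≃ₜ Z, EqOn σ id K ∧ (∀ x ∈ T \ K, R x (h (σ x))) ∧ ∀ x, dist (σ x) x ≤ ε := by
  obtain ⟨D, hD, hclopen, hDK, hsmall⟩ := exists_isWhitneyFamily hK.isOpen_compl hε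
  have realize_on_piece : ∀ i, ∃ e : D i ≃ₜ D i, ∀ x : D i, x.1 ∈ T → R x (h (e x)) := fun i => by
    by_cases hne : (D i).Nonempty
    · obtain ⟨e, he⟩ := hT (hclopen i) hne
        ⟨h.isClosedMap _ (hclopen i).isClosed, h.isOpenMap _ (hclopen i).isOpen⟩ (hne.image h)
      refine ⟨e.trans (h.image (D i)).symm, fun x hx => ?_⟩
      have : h ((h.image (D i)).symm (e x)) = e x :=
        congrArg Subtype.val ((h.image (D i)).apply_symm_apply (e x))
      exact this.symm ▸ he x hx
    · exact ⟨.refl _, fun x => (hne ⟨x, x.2⟩).elim⟩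
  choose e he using realize_on_piece
  obtain ⟨σ, hσ, hσK⟩ := hD.exists_homeomorph e
  rw [hDK, compl_compl] at hσK
  have exists_piece : ∀ x ∉ K, ∃ i, x ∈ D i := fun x hx => mem_iUnion.1 (hDK.symm.subset hx)
  refine ⟨σ, hσK, fun x ⟨hxT, hxK⟩ => ?_, fun x => ?_⟩
  · obtain ⟨i, hi⟩ := exists_piece x hxK
    exact (hσ i ⟨x, hi⟩).symm ▸ he i ⟨x, hi⟩ hxT
  · by_cases hxK : x ∈ K
    · rw [hσK hxK, id, dist_self]
      exact hε.le
    · obtain ⟨i, hi⟩ := exists_piece x hxK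
      exact (hσ i ⟨x, hi⟩).symm ▸ hsmall i _ (e i ⟨x, hi⟩).2 _ hi

end LocallyRealizable

section Fusion

theorem exists_homeomorph_tendsto {X Y : Type*} [MetricSpace X] [CompactSpace X] [MetricSpace Y]
    [CompactSpace Y] {h : ℕ → X ≃ₜ Y} (hh : CauchySeq fun n => (h n : C(X, Y)))
    (hsymm : CauchySeq fun n => ((h n).symm : C(Y, X))) :
    ∃ H : X ≃ₜ Y, Tendsto (fun n => (h n : C(X, Y))) atTop (𝓝 H) := by
  obtain ⟨F, hF⟩ := cauchySeq_tendsto_of_complete hh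
  obtain ⟨G, hG⟩ := cauchySeq_tendsto_of_complete hsymm
  have comp_FG : F.comp G = .id Y := tendsto_nhds_unique (hF.compCM hG) <| by
    simpa only [Homeomorph.toContinuousMap_comp_symm] using tendsto_const_nhds
  have comp_GF : G.comp F = .id X := tendsto_nhds_unique (hG.compCM hF) <| by
    simpa only [Homeomorph.symm_comp_toContinuousMap] using tendsto_const_nhds
  exact ⟨⟨⟨F, G, DFunLike.congr_fun comp_GF, DFunLike.congr_fun comp_FG⟩, F.continuous,
    G.continuous⟩, hF⟩

/-- A stage of the back-and-forth construction: a homeomorphism together with a closed set of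
points whose images, known to be `R`-related to them, are never to be changed again. -/
structure PartialRealization {Z : Type*} [TopologicalSpace Z] (R : Z → Z → Prop) where
  toHomeomorph : Z ≃ₜ Z
  domain : Set Z
  isClosed_domain : IsClosed domain
  rel : ∀ x ∈ domain, R x (toHomeomorph x)

namespace PartialRealization

variable {Z : Type*}

/-- The inverse of a partial realization of `R`, realizing the converse of `R`. -/
def symm [TopologicalSpace Z] {R : Z → Z → Prop} (p : PartialRealization R) :
    PartialRealization (flip R) where
  toHomeomorph := p.toHomeomorph.symm
  domain := p.toHomeomorph '' p.domain
  isClosed_domain := p.toHomeomorph.isClosedMap _ p.isClosed_domain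
  rel := forall_mem_image.2 fun x hx =>
    show R _ _ from (p.toHomeomorph.symm_apply_apply x).symm ▸ p.rel x hx

variable [MetricSpace Z] [CompactSpace Z] {R : Z → Z → Prop} {ε : ℝ}

/-- `q` is a later stage than `p` of a back-and-forth construction, and the homeomorphisms of the
two stages and their inverses are uniformly within `ε` of each other. -/
structure IsExtension (ε : ℝ) (p q : PartialRealization R) : Prop where
  domain_subset : p.domain ⊆ q.domain
  eqOn : EqOn q.toHomeomorph p.toHomeomorph p.domain
  dist_le : dist (p.toHomeomorph : C(Z, Z)) q.toHomeomorph ≤ ε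
  dist_symm_le : dist (p.toHomeomorph.symm : C(Z, Z)) q.toHomeomorph.symm ≤ ε

theorem IsExtension.symm_right {p : PartialRealization R} {q : PartialRealization (flip R)}
    (h : IsExtension ε p.symm q) : IsExtension ε p q.symm := by
  have apply_apply : ∀ x ∈ p.domain, q.toHomeomorph (p.toHomeomorph x) = x := fun x hx =>
    (h.eqOn (mem_image_of_mem _ hx)).trans (p.toHomeomorph.symm_apply_apply x)
  refine ⟨fun x hx => ?_, fun x hx => ?_, h.dist_symm_le, h.dist_le⟩
  · exact ⟨p.toHomeomorph x, h.domain_subset (mem_image_of_mem _ hx), apply_apply x hx⟩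
  · exact q.toHomeomorph.symm_apply_eq.2 (apply_apply x hx).symm

theorem exists_isExtension_domain [TotallyDisconnectedSpace Z] {T : Set Z} (hTc : IsClosed T)
    (hT : LocallyRealizable R T) (p : PartialRealization R) (hε : 0 < ε) :
    ∃ q, IsExtension ε p q ∧ T ⊆ q.domain := by
  let h := p.toHomeomorph
  obtain ⟨δ, hδ, hh⟩ := Metric.uniformContinuous_iff.1
    (CompactSpace.uniformContinuous_of_continuous h.continuous) ε hε
  obtain ⟨σ, hσK, hσT, hσ⟩ :=
    hT.exists_small_correction h p.isClosed_domain (lt_min hε (half_pos hδ))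
  have rel : ∀ x ∈ p.domain ∪ T, R x (h (σ x)) := fun x hx => by
    by_cases hxK : x ∈ p.domain
    · exact (hσK hxK).symm ▸ p.rel x hxK
    · exact hσT x ⟨hx.resolve_left hxK, hxK⟩
  refine ⟨⟨σ.trans h, p.domain ∪ T, p.isClosed_domain.union hTc, rel⟩,
    ⟨subset_union_left, fun x hx => congrArg h (hσK hx), ?_, ?_⟩, subset_union_right⟩
  · refine (ContinuousMap.dist_le hε.le).2 fun x => ?_
    rw [dist_comm]
    exact (hh (((hσ x).trans (min_le_right _ _)).trans_lt (half_lt_self hδ))).le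
  · refine (ContinuousMap.dist_le hε.le).2 fun y => ?_
    have := hσ (σ.symm (h.symm y))
    rw [σ.apply_symm_apply] at this
    exact this.trans (min_le_left _ _)

theorem exists_isExtension_image [TotallyDisconnectedSpace Z] {T : Set Z} (hTc : IsClosed T)
    (hT : LocallyRealizable (flip R) T) (p : PartialRealization R) (hε : 0 < ε) :
    ∃ q, IsExtension ε p q ∧ T ⊆ q.toHomeomorph '' q.domain := by
  obtain ⟨q, hpq, hTq⟩ := exists_isExtension_domain hTc hT p.symm hε
  refine ⟨q.symm, hpq.symm_right, hTq.trans fun x hx => ?_⟩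
  exact ⟨q.toHomeomorph x, mem_image_of_mem _ hx, q.toHomeomorph.symm_apply_apply x⟩

theorem exists_homeomorph_eqOn_of_isExtension {p : ℕ → PartialRealization R}
    (hp : ∀ n, IsExtension (1 / 2 / 2 ^ n) (p n) (p (n + 1))) :
    ∃ H : Z ≃ₜ Z, ∀ n, EqOn H (p n).toHomeomorph (p n).domain := by
  obtain ⟨H, hH⟩ := exists_homeomorph_tendsto (h := fun n => (p n).toHomeomorph)
    (cauchySeq_of_le_geometric_two fun n => (hp n).dist_le)
    (cauchySeq_of_le_geometric_two fun n => (hp n).dist_symm_le)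
  have domain_mono : Monotone fun n => (p n).domain :=
    monotone_nat_of_le_succ fun n => (hp n).domain_subset
  refine ⟨H, fun n x hx => ?_⟩
  have stable : ∀ m ≥ n, (p m).toHomeomorph x = (p n).toHomeomorph x := fun m hm => by
    induction m, hm using Nat.le_induction with
    | base => rfl
    | succ m hm ih => exact ((hp m).eqOn (domain_mono hm hx)).trans ih
  have tendsto_apply := ((continuous_eval_const x).tendsto (H : C(Z, Z))).comp hH
  refine tendsto_nhds_unique tendsto_apply ?_
  exact tendsto_const_nhds.congr' <| (eventually_ge_atTop n).mono fun m hm => (stable m hm).symm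

theorem exists_homeomorph_of_forall_exists_isExtension {ι : Type*} [Countable ι]
    {P : ι → PartialRealization R → Prop}
    (hP : ∀ i p ε, 0 < ε → ∃ q, IsExtension ε p q ∧ P i q) :
    ∃ H : Z ≃ₜ Z, ∀ i, ∃ q, P i q ∧ EqOn H q.toHomeomorph q.domain := by
  rcases isEmpty_or_nonempty ι with _ | _
  · exact ⟨.refl Z, isEmptyElim⟩
  obtain ⟨task, task_surjective⟩ := exists_surjective_nat ι
  have exists_next : ∀ n p, ∃ q, IsExtension (1 / 2 / 2 ^ n) p q ∧ P (task n) q :=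
    fun n p => hP (task n) p _ (by positivity)
  choose next hnext hPnext using exists_next
  let p : ℕ → PartialRealization R :=
    Nat.rec ⟨.refl Z, ∅, isClosed_empty, fun _ h => h.elim⟩ next
  obtain ⟨H, hH⟩ := exists_homeomorph_eqOn_of_isExtension (p := p) fun n => hnext n (p n)
  exact ⟨H, task_surjective.forall.2 fun n => ⟨p (n + 1), hPnext n (p n), hH (n + 1)⟩⟩

end PartialRealization

open PartialRealization in
theorem LocallyRealizable.exists_homeomorph {Z : Type*} [TopologicalSpace Z] [CompactSpace Z]
    [TopologicalSpace.MetrizableSpace Z] [TotallyDisconnectedSpace Z] {R : Z → Z → Prop}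
    {𝒯 𝒯' : Set (Set Z)} (h𝒯 : 𝒯.Countable) (h𝒯' : 𝒯'.Countable)
    (forth : ∀ T ∈ 𝒯, IsClosed T ∧ LocallyRealizable R T)
    (back : ∀ T ∈ 𝒯', IsClosed T ∧ LocallyRealizable (flip R) T) :
    ∃ H : Z ≃ₜ Z, (∀ x ∈ ⋃₀ 𝒯, R x (H x)) ∧ ∀ x, H x ∈ ⋃₀ 𝒯' → R x (H x) := by
  let := TopologicalSpace.metrizableSpaceMetric Z
  have := h𝒯.to_subtype
  have := h𝒯'.to_subtype
  obtain ⟨H, hH⟩ := exists_homeomorph_of_forall_exists_isExtension (R := R) (ι := 𝒯 ⊕ 𝒯')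
    (P := Sum.elim (fun T q => T.1 ⊆ q.domain) fun T q => T.1 ⊆ q.toHomeomorph '' q.domain) <| by
      rintro (⟨T, hT⟩ | ⟨T, hT⟩) p ε hε
      · exact exists_isExtension_domain (forth T hT).1 (forth T hT).2 p hε
      · exact exists_isExtension_image (back T hT).1 (back T hT).2 p hε
  refine ⟨H, ?_, ?_⟩
  · rintro x ⟨T, hT, hx⟩
    obtain ⟨q, hTq, hHq⟩ := hH (.inl ⟨T, hT⟩)
    exact (hHq (hTq hx)).symm ▸ q.rel x (hTq hx)
  · rintro x ⟨T, hT, hx⟩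
    obtain ⟨q, hTq, hHq⟩ := hH (.inr ⟨T, hT⟩)
    obtain ⟨y, hy, hyx⟩ := hTq hx
    obtain rfl : y = x := H.injective ((hHq hy).trans hyx)
    exact (hHq hy).symm ▸ q.rel y hy

end Fusion

section GDelta

theorem isGδ_range_of_isEmbedding {Y Z : Type*} [TopologicalSpace Y]
    [TopologicalSpace.IsCompletelyMetrizableSpace Y] [TopologicalSpace Z]
    [TopologicalSpace.MetrizableSpace Z] {f : Y → Z} (hf : IsEmbedding f) : IsGδ (range f) := by
  let := TopologicalSpace.upgradeIsCompletelyMetrizable Y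
  let O (n : ℕ) : Set Z :=
    ⋃₀ {O | IsOpen O ∧ ∀ y ∈ f ⁻¹' O, ∀ y' ∈ f ⁻¹' O, dist y y' < 1 / (n + 1)}
  have range_eq : range f = closure (range f) ∩ ⋂ n, O n := by
    refine Subset.antisymm (subset_inter subset_closure (subset_iInter fun n => ?_)) ?_
    · rintro _ ⟨y, rfl⟩
      have hr : (0 : ℝ) < 1 / (n + 1) / 2 := by positivity
      obtain ⟨U, hU, hUball⟩ := hf.isInducing.isOpen_iff.1 (Metric.isOpen_ball (x := y))
      refine ⟨U, ⟨hU, fun a ha b hb => ?_⟩, hUball.symm.subset (Metric.mem_ball_self hr)⟩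
      have hay := Metric.mem_ball.1 (hUball.subset ha)
      have hby := Metric.mem_ball.1 (hUball.subset hb)
      linarith [dist_triangle_right a b y]
    · rintro z ⟨hz, hzO⟩
      have : (comap f (𝓝 z)).NeBot :=
        comap_neBot_iff_frequently.2 (mem_closure_iff_frequently.1 hz)
      have cauchy : Cauchy (comap f (𝓝 z)) := Metric.cauchy_iff.2 ⟨this, fun ε hε => by
        obtain ⟨n, hn⟩ := exists_nat_one_div_lt hε
        obtain ⟨U, ⟨hU, hdist⟩, hzU⟩ := mem_iInter.1 hzO n
        exact ⟨f ⁻¹' U, preimage_mem_comap (hU.mem_nhds hzU),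
          fun a ha b hb => (hdist a ha b hb).trans hn⟩⟩
      obtain ⟨y, hy⟩ := CompleteSpace.complete cauchy
      exact ⟨y, tendsto_nhds_unique (hf.continuous.tendsto y |>.mono_left hy) tendsto_comap⟩
  rw [range_eq]
  exact isClosed_closure.isGδ.inter <|
    .iInter_of_isOpen fun n => isOpen_sUnion fun U hU => hU.1

theorem CountablyControlled.exists_isGδ {Z : Type*} [TopologicalSpace Z]
    [TopologicalSpace.MetrizableSpace Z] {X D : Set Z} (hX : CountablyControlled X)
    (hD : D.Countable) (hDX : D ⊆ X) : ∃ G, IsGδ G ∧ D ⊆ G ∧ G ⊆ X := by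
  obtain ⟨G, hDG, hG⟩ := hX (Subtype.val ⁻¹' D) (hD.preimage Subtype.val_injective)
  refine ⟨Subtype.val '' G, ?_, fun x hx => ⟨⟨x, hDX hx⟩, hDG hx, rfl⟩,
    Subtype.coe_image_subset X G⟩
  rw [image_eq_range]
  exact isGδ_range_of_isEmbedding (IsEmbedding.subtypeVal.comp IsEmbedding.subtypeVal)

end GDelta

section HHomEmbedded

variable {Z : Type*} [TopologicalSpace Z] {X E W : Set Z}

theorem HHomEmbedded.exists_isOpenEmbedding (hX : HHomEmbedded X) (hW : IsOpen W)
    (hne : W.Nonempty) : ∃ φ : Z → Z, IsOpenEmbedding φ ∧ range φ ⊆ W ∧ φ ⁻¹' X = X := by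
  obtain ⟨ℬ, hℬ, hbase, hφ⟩ := hX
  obtain ⟨U, hU, hUW⟩ := hbase W hW hne
  obtain ⟨φ, hφX⟩ := hφ U hU
  let φ' : Z → Z := fun z => φ z
  have hφ' : IsOpenEmbedding φ' :=
    (hℬ U hU).1.isOpen.isOpenEmbedding_subtypeVal.comp φ.isOpenEmbedding
  have preimage_U : φ' ⁻¹' U = univ := eq_univ_of_forall fun z => (φ z).2
  refine ⟨φ', hφ', range_subset_iff.2 fun z => hUW (φ z).2, ?_⟩
  calc φ' ⁻¹' X = φ' ⁻¹' (X ∩ U) := by rw [preimage_inter, preimage_U, inter_univ]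
    _ = φ' ⁻¹' (φ' '' X) := by rw [← hφX, image_image]
    _ = X := preimage_image_eq X hφ'.injective

theorem HHomEmbedded.dense (hX : HHomEmbedded X) (hne : X.Nonempty) : Dense X :=
  dense_iff_inter_open.2 fun W hW hWne => by
    obtain ⟨φ, -, hφW, hφX⟩ := hX.exists_isOpenEmbedding hW hWne
    obtain ⟨x, hx⟩ := hne
    exact ⟨φ x, hφW (mem_range_self x), hφX.symm.subset hx⟩

theorem HHomEmbedded.exists_isGδ [SecondCountableTopology Z] [TopologicalSpace.MetrizableSpace Z]
    (hX : HHomEmbedded X) (hX' : CountablyControlled X) (hE : E.Countable) (hEX : E ⊆ X) :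
    ∃ G, IsGδ G ∧ E ⊆ G ∧ G ⊆ X ∧ ∀ W, IsOpen W → W.Nonempty →
      ∃ φ : Z → Z, IsOpenEmbedding φ ∧ range φ ⊆ W ∧ φ ⁻¹' X = X ∧ φ ⁻¹' E ⊆ G := by
  choose φ hφ hφV hφX using fun V : TopologicalSpace.countableBasis Z =>
    hX.exists_isOpenEmbedding (TopologicalSpace.isOpen_of_mem_countableBasis V.2)
      (TopologicalSpace.nonempty_of_mem_countableBasis V.2)
  have preimage_subset : ∀ V, φ V ⁻¹' E ⊆ X := fun V => (preimage_mono hEX).trans (hφX V).subset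
  obtain ⟨G, hG, hDG, hGX⟩ := hX'.exists_isGδ (D := E ∪ ⋃ V, φ V ⁻¹' E)
    (hE.union <| countable_iUnion fun V => hE.preimage (hφ V).injective)
    (union_subset hEX (iUnion_subset preimage_subset))
  refine ⟨G, hG, subset_union_left.trans hDG, hGX, fun W hW ⟨w, hw⟩ => ?_⟩
  obtain ⟨V, hV, -, hVW⟩ :=
    (TopologicalSpace.isBasis_countableBasis Z).exists_subset_of_mem_open hw hW
  exact ⟨φ ⟨V, hV⟩, hφ _, (hφV _).trans hVW, hφX _,
    (subset_iUnion (fun V => φ V ⁻¹' E) _).trans (subset_union_right.trans hDG)⟩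

end HHomEmbedded

section Matching

variable {Z : Type*} {X A B G : Set Z}

/-- `y` may serve as the image of `x` under a bijection mapping `X` onto `X` and `A` onto `B`. -/
def Matches (X A B : Set Z) (x y : Z) : Prop :=
  (x ∈ X ↔ y ∈ X) ∧ (x ∈ A ↔ y ∈ B)

theorem flip_matches : flip (Matches X A B) = Matches X B A := by
  ext x y
  simp only [flip, Matches, iff_comm]

variable [TopologicalSpace Z]

theorem IsCantorSpace.locallyRealizable_of_isOpenEmbedding (hZ : IsCantorSpace Z)
    {R : Z → Z → Prop} {C : Set Z} (hC : IsClosed C) (hC' : Dense Cᶜ)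
    (h : ∀ W, IsOpen W → W.Nonempty →
      ∃ φ : Z → Z, IsOpenEmbedding φ ∧ range φ ⊆ W ∧ ∀ x ∈ C, R x (φ x)) :
    LocallyRealizable R C := fun V W hV hVne hW hWne => by
  have := hZ.compactSpace
  have := hZ.metrizableSpace
  have := hZ.totallyDisconnectedSpace
  obtain ⟨φ, hφ, hφW, hφR⟩ := h W hW.isOpen hWne
  let f : V → W := fun x => ⟨φ x, hφW (mem_range_self _)⟩
  have hf : IsOpenEmbedding f :=
    .of_comp f hW.isOpen.isOpenEmbedding_subtypeVal <| hφ.comp hV.isOpen.isOpenEmbedding_subtypeVal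
  obtain ⟨p, hpV, hpC⟩ := hC'.inter_open_nonempty V hV.isOpen hVne
  obtain ⟨N, hN, hpN, hNC⟩ := compact_exists_isClopen_in_isOpen hC.isOpen_compl hpC
  have cantor_V := hZ.subtype_of_isClopen hV hVne
  have cantor_W := hZ.subtype_of_isClopen hW hWne
  obtain ⟨e, he⟩ := cantor_V.exists_homeomorph_eqOn_compl cantor_W hf
    (hN.preimage continuous_subtype_val) ⟨⟨p, hpV⟩, hpN⟩
  refine ⟨e, fun x hx => ?_⟩
  rw [he fun hxN => hNC hxN hx]
  exact hφR x hx

theorem IsCantorSpace.locallyRealizable_matches_singleton (hZ : IsCantorSpace Z) (hA : A ⊆ X)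
    (hB : B ⊆ X) (hBd : Dense B) {a : Z} (ha : a ∈ A) :
    LocallyRealizable (Matches X A B) {a} := fun V W hV hVne hW hWne => by
  have cantor_V := hZ.subtype_of_isClopen hV hVne
  have cantor_W := hZ.subtype_of_isClopen hW hWne
  obtain ⟨b, hbW, hbB⟩ := hBd.inter_open_nonempty W hW.isOpen hWne
  by_cases haV : a ∈ V
  · obtain ⟨e, he⟩ := cantor_V.exists_homeomorph_apply_eq cantor_W ⟨a, haV⟩ ⟨b, hbW⟩
    refine ⟨e, ?_⟩
    rintro ⟨x, hxV⟩ rfl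
    rw [he]
    exact ⟨iff_of_true (hA ha) (hB hbB), iff_of_true ha hbB⟩
  · obtain ⟨e⟩ := cantor_V.nonempty_homeomorph cantor_W
    exact ⟨e, fun x hx => (haV (hx ▸ x.2)).elim⟩

theorem IsCantorSpace.exists_locallyRealizable_matches_cover (hZ : IsCantorSpace Z)
    (hA : A.Countable) (hB : Dense B) (hABG : A ∪ B ⊆ G) (hG : IsGδ G) (hGX : G ⊆ X)
    (h : ∀ W, IsOpen W → W.Nonempty →
      ∃ φ : Z → Z, IsOpenEmbedding φ ∧ range φ ⊆ W ∧ φ ⁻¹' X = X ∧ φ ⁻¹' (A ∪ B) ⊆ G) :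
    ∃ 𝒯 : Set (Set Z), 𝒯.Countable ∧
      (∀ T ∈ 𝒯, IsClosed T ∧ LocallyRealizable (Matches X A B) T) ∧ ⋃₀ 𝒯 = Gᶜ ∪ A := by
  have := hZ.metrizableSpace
  obtain ⟨hAG, hBG⟩ := union_subset_iff.1 hABG
  obtain ⟨𝒮, h𝒮, h𝒮c, rfl⟩ := hG
  refine ⟨compl '' 𝒮 ∪ singleton '' A, (h𝒮c.image _).union (hA.image _), ?_, ?_⟩
  · rintro _ (⟨U, hU, rfl⟩ | ⟨a, ha, rfl⟩)
    · refine ⟨(h𝒮 U hU).isClosed_compl, hZ.locallyRealizable_of_isOpenEmbedding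
        (h𝒮 U hU).isClosed_compl ?_ fun W hW hWne => ?_⟩
      · rw [compl_compl]
        exact hB.mono (hBG.trans (sInter_subset_of_mem hU))
      · obtain ⟨φ, hφ, hφW, hφX, hφG⟩ := h W hW hWne
        refine ⟨φ, hφ, hφW, fun x hx => ⟨(Set.ext_iff.1 hφX x).symm, iff_of_false ?_ ?_⟩⟩
        · exact fun hxA => hx (hAG hxA U hU)
        · exact fun hxB => hx (hφG (.inr hxB) U hU)
    · exact ⟨isClosed_singleton, hZ.locallyRealizable_matches_singleton
        (hAG.trans hGX) (hBG.trans hGX) hB ha⟩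
  · rw [sUnion_union, ← compl_sInter, sUnion_image, biUnion_of_singleton]

theorem IsCantorSpace.exists_homeomorph_matches (hZ : IsCantorSpace Z) (hX : HHomEmbedded X)
    (hX' : CountablyControlled X) (hAX : A ⊆ X) (hBX : B ⊆ X) (hA : A.Countable) (hB : B.Countable)
    (hAd : Dense A) (hBd : Dense B) : ∃ H : Z ≃ₜ Z, ∀ x, Matches X A B x (H x) := by
  have := hZ.compactSpace
  have := hZ.metrizableSpace
  have := hZ.totallyDisconnectedSpace
  obtain ⟨G, hG, hABG, hGX, h⟩ := hX.exists_isGδ hX' (hA.union hB) (union_subset hAX hBX)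
  obtain ⟨𝒯, h𝒯, forth, 𝒯_cover⟩ :=
    hZ.exists_locallyRealizable_matches_cover hA hBd hABG hG hGX h
  obtain ⟨𝒯', h𝒯', back, 𝒯'_cover⟩ := hZ.exists_locallyRealizable_matches_cover hB hAd
    (union_comm A B ▸ hABG) hG hGX (union_comm A B ▸ h)
  rw [← flip_matches] at back
  obtain ⟨H, hforth, hback⟩ := LocallyRealizable.exists_homeomorph h𝒯 h𝒯' forth back
  rw [𝒯_cover] at hforth
  rw [𝒯'_cover] at hback
  refine ⟨H, fun x => ?_⟩
  by_cases hx : x ∈ Gᶜ ∪ A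
  · exact hforth x hx
  by_cases hHx : H x ∈ Gᶜ ∪ B
  · exact hback x hHx
  · rw [mem_union, not_or, notMem_compl_iff] at hx hHx
    exact ⟨iff_of_true (hGX hx.1) (hGX hHx.1), iff_of_false hx.2 hHx.2⟩

end Matching

theorem statement10_general {Z : Type*} [TopologicalSpace Z] (hZ : IsCantorSpace Z) (X : Set Z)
    (h1 : HHomEmbedded X) (h2 : CountablyControlled X) : IsCDH X := by
  intro A B hA hAd hB hBd
  rcases X.eq_empty_or_nonempty with rfl | hne
  · exact ⟨.refl _, Subsingleton.elim _ _⟩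
  have dense_coe : ∀ S : Set X, Dense S → Dense (Subtype.val '' S) := fun S hS =>
    (h1.dense hne).denseRange_val.dense_image continuous_subtype_val hS
  obtain ⟨H, hH⟩ := hZ.exists_homeomorph_matches h1 h2 (Subtype.coe_image_subset X A)
    (Subtype.coe_image_subset X B) (hA.image _) (hB.image _) (dense_coe A hAd) (dense_coe B hBd)
  let h : X ≃ₜ X := H.subtype fun x => (hH x).1
  have mem_iff : ∀ x, x ∈ A ↔ h x ∈ B := fun x => by
    rw [← Subtype.val_injective.mem_set_image, ← Subtype.val_injective.mem_set_image (s := B)]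
    exact (hH x).2
  exact ⟨h, by rw [show A = h ⁻¹' B from Set.ext mem_iff, h.image_preimage]⟩

/-- If `X` is a subspace of the Cantor set `2^ω` that is h-homogeneously
embedded in `2^ω` and countably controlled, then `X` is countable dense
homogeneous. -/
theorem statement10 (X : Set (ℕ → Bool))
    (h1 : HHomEmbedded X) (h2 : CountablyControlled X) : IsCDH X := by
  exact statement10_general ⟨Homeomorph.refl _⟩ X h1 h2
end

section
/- Let I be a countable set, and for each i ∈ I let X_i be a subspace of a separable metrizable space Z_i such that X_i is h-homogeneously embedded in Z_i. Then the product ∏_{i∈I} X_i is h-homogeneously embedded in ∏_{i∈I} Z_i. -/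
/-!
A basic open set of the product restricts only finitely many coordinates. Shrink each restricting
factor to a clopen copy of the pair `(Z i, X i)` and leave the other factors whole: the result is a
clopen box, and the product of the factorwise homeomorphisms (the identity on whole factors) is a
homeomorphism from the product of the `Z i` onto it that matches up the product of the `X i`.
-/

/-- `IsPairCopy X U` says that the pair `(U, X ∩ U)` is homeomorphic to the pair `(Z, X)`. The
equality `φ[X] = X ∩ U` is encoded pointwise: `φ` preserves and reflects membership in `X`. -/
def IsPairCopy {Z : Type*} [TopologicalSpace Z] (X U : Set Z) : Prop :=
  ∃ φ : Z ≃ₜ U, ∀ z, (φ z : Z) ∈ X ↔ z ∈ X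

theorem image_val_image_eq_inter_iff {Z : Type*} {X U : Set Z} (φ : Z ≃ U) :
    Subtype.val '' (φ '' X) = X ∩ U ↔ ∀ z, (φ z : Z) ∈ X ↔ z ∈ X := by
  rw [Set.inter_comm, ← Subtype.image_preimage_coe, Subtype.val_injective.image_injective.eq_iff,
    Set.ext_iff, φ.surjective.forall]
  simp only [φ.injective.mem_set_image, Set.mem_preimage, iff_comm]

section PairCopy

variable {Z : Type*} [TopologicalSpace Z] {X U : Set Z}

theorem isPairCopy_iff_exists_image_eq :
    IsPairCopy X U ↔ ∃ φ : Z ≃ₜ U, Subtype.val '' (φ '' X) = X ∩ U :=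
  exists_congr fun φ => (image_val_image_eq_inter_iff φ.toEquiv).symm

theorem isPairCopy_univ (X : Set Z) : IsPairCopy X Set.univ :=
  ⟨(Homeomorph.Set.univ Z).symm, fun _ => Iff.rfl⟩

theorem IsPairCopy.nonempty [Nonempty Z] (h : IsPairCopy X U) : U.Nonempty :=
  let ⟨φ, _⟩ := h
  Set.nonempty_coe_sort.1 (Nonempty.map φ ‹_›)

theorem hhomEmbedded_iff_exists_isPairCopy :
    HHomEmbedded X ↔
      ∀ V : Set Z, IsOpen V → V.Nonempty → ∃ U ⊆ V, IsClopen U ∧ IsPairCopy X U := by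
  simp only [HHomEmbedded, ← isPairCopy_iff_exists_image_eq]
  constructor
  · rintro ⟨ℬ, hclopen, hπ, hcopy⟩ V hV hne
    obtain ⟨U, hU, hUV⟩ := hπ V hV hne
    exact ⟨U, hUV, (hclopen U hU).1, hcopy U hU⟩
  · intro h
    refine ⟨{U | (IsClopen U ∧ U.Nonempty) ∧ IsPairCopy X U}, fun U hU => hU.1,
      fun V hV hne => ?_, fun U hU => hU.2⟩
    obtain ⟨U, hUV, hclopen, hcopy⟩ := h V hV hne
    have : Nonempty Z := hne.to_type
    exact ⟨U, ⟨⟨hclopen, hcopy.nonempty⟩, hcopy⟩, hUV⟩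

end PairCopy

section Pi

variable {I : Type*} {Z : I → Type*} [∀ i, TopologicalSpace (Z i)]

theorem isClopen_pi_of_finite {s : Set I} (hs : s.Finite) {U : ∀ i, Set (Z i)}
    (hU : ∀ i ∈ s, IsClopen (U i)) : IsClopen (s.pi U) :=
  ⟨isClosed_set_pi fun i hi => (hU i hi).isClosed, isOpen_set_pi hs fun i hi => (hU i hi).isOpen⟩

/-- The topological version of `Equiv.Set.univPi`: a box is the product of its sides. -/
def univPiHomeomorph (U : ∀ i, Set (Z i)) : Set.univ.pi U ≃ₜ ∀ i, U i where
  toEquiv := Equiv.Set.univPi U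
  continuous_toFun := continuous_pi fun i =>
    ((continuous_apply i).comp continuous_subtype_val).subtype_mk _
  continuous_invFun := Continuous.subtype_mk
    (continuous_pi fun i => continuous_subtype_val.comp (continuous_apply i)) _

theorem IsPairCopy.univ_pi {X U : ∀ i, Set (Z i)} (h : ∀ i, IsPairCopy (X i) (U i)) :
    IsPairCopy (Set.univ.pi X) (Set.univ.pi U) := by
  choose φ hφ using h
  refine ⟨(Homeomorph.piCongrRight φ).trans (univPiHomeomorph U).symm, fun z => ?_⟩
  exact forall₂_congr fun i _ => hφ i (z i)

theorem IsPairCopy.pi {X U : ∀ i, Set (Z i)} {s : Set I}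
    (h : ∀ i ∈ s, IsPairCopy (X i) (U i)) : IsPairCopy (Set.univ.pi X) (s.pi U) := by
  classical
  rw [← Set.univ_pi_piecewise_univ s U]
  refine .univ_pi fun i => ?_
  by_cases hi : i ∈ s
  · simpa only [Set.piecewise_eq_of_mem _ _ _ hi] using h i hi
  · simpa only [Set.piecewise_eq_of_notMem _ _ _ hi] using isPairCopy_univ (X i)

theorem statement11_general (X : ∀ i, Set (Z i)) (h : ∀ i, HHomEmbedded (X i)) :
    HHomEmbedded (Set.univ.pi X) := by
  simp only [hhomEmbedded_iff_exists_isPairCopy] at h ⊢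
  rintro V hV ⟨z, hz⟩
  obtain ⟨F, W, hW, hWV⟩ := isOpen_pi_iff.1 hV z hz
  choose! U hUW hclopen hcopy using fun i hi => h i (W i) (hW i hi).1 ⟨z i, (hW i hi).2⟩
  exact ⟨(F : Set I).pi U, (Set.pi_mono hUW).trans hWV,
    isClopen_pi_of_finite F.finite_toSet hclopen, IsPairCopy.pi hcopy⟩

end Pi

/-- If `I` is a countable set and, for each `i ∈ I`, `X i` is a subspace of a
separable metrizable space `Z i` which is h-homogeneously embedded in `Z i`,
then `∏_{i∈I} X i` is h-homogeneously embedded in `∏_{i∈I} Z i`. -/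
theorem statement11 {I : Type*} [Countable I] {Z : I → Type*}
    [∀ i, TopologicalSpace (Z i)] [∀ i, TopologicalSpace.SeparableSpace (Z i)]
    [∀ i, TopologicalSpace.MetrizableSpace (Z i)]
    (X : ∀ i, Set (Z i)) (h : ∀ i, HHomEmbedded (X i)) :
    HHomEmbedded (Set.pi Set.univ X) :=
  statement11_general X h
end

section
/- Let I be a countable set, and for each i ∈ I let X_i be a countably controlled separable metrizable space. Then the product ∏_{i∈I} X_i is countably controlled. -/
theorem polishSpace_range_of_isEmbedding {α β : Type*} [TopologicalSpace α] [TopologicalSpace β]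
    [PolishSpace α] {f : α → β} (hf : Topology.IsEmbedding f) : PolishSpace (Set.range f) :=
  hf.toHomeomorph.symm.isClosedEmbedding.polishSpace

section Pi

variable {I : Type*} [Countable I] {X : I → Type*} [∀ i, TopologicalSpace (X i)]

theorem polishSpace_univ_pi {s : ∀ i, Set (X i)} (hs : ∀ i, PolishSpace (s i)) :
    PolishSpace (Set.univ.pi s) := by
  have range_eq : Set.range (Pi.map fun i => ((↑) : s i → X i)) = Set.univ.pi s := by
    simp only [Set.range_piMap, Subtype.range_coe]
  rw [← range_eq]
  exact polishSpace_range_of_isEmbedding (.piMap fun _ => .subtypeVal)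

theorem statement12_general (h : ∀ i, CountablyControlled (X i)) :
    CountablyControlled (∀ i, X i) := by
  intro D hD
  choose G subset_G polish_G using fun i => h i (Function.eval i '' D) (hD.image _)
  have subset_pi : D ⊆ Set.univ.pi G := fun x hx i _ => subset_G i (Set.mem_image_of_mem _ hx)
  exact ⟨Set.univ.pi G, subset_pi, polishSpace_univ_pi polish_G⟩

end Pi

/-- If `I` is a countable set and, for each `i ∈ I`, `X i` is a countably
controlled separable metrizable space, then `∏_{i∈I} X i` is countably
controlled. -/
theorem statement12 {I : Type*} [Countable I] {X : I → Type*}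
    [∀ i, TopologicalSpace (X i)] [∀ i, TopologicalSpace.SeparableSpace (X i)]
    [∀ i, TopologicalSpace.MetrizableSpace (X i)]
    (h : ∀ i, CountablyControlled (X i)) :
    CountablyControlled (∀ i, X i) :=
  statement12_general h
end

section
/- There exists a λ'-set X of cardinality ω₁ that is h-homogeneously embedded in the Cantor set 2^ω. -/
/-- A space is a λ-set if every countable subset is Gδ. -/
def IsLambdaSet (X : Type*) [TopologicalSpace X] : Prop :=
  ∀ D : Set X, D.Countable → IsGδ D

/-- A subspace `X` of the Cantor set `2^ω` is a λ'-set if `X ∪ D` is a λ-set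
for every countable `D ⊆ 2^ω`. -/
def IsLambdaPrimeSet (X : Set (ℕ → Bool)) : Prop :=
  ∀ D : Set (ℕ → Bool), D.Countable → IsLambdaSet ↥(X ∪ D)

/-!
Well-founded recursion along cofinal sequences gives a coherent sequence of finite-to-one functions
`e_α : α → ω`, `α < ω₁`. Coding the values of `e_α` in points of `2^ω` turns it into a decreasing
`ω₁`-sequence of nonempty `Fσ` sets with empty intersection, and a choice of one point from each
is a λ'-set: a countable set misses some member of the sequence, which contains all but countably
many of the chosen points. Closing under tail equivalence keeps the set λ', because tail equivalence
is induced by countably many continuous maps with countable fibres, and it makes the set invariant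
under adding finite prefixes, that is, under the canonical homeomorphisms of `2^ω` with its
cylinders.
-/

open Set Filter Topology Cardinal Function

section CountableInitialSegments

variable {Ω : Type*} [LinearOrder Ω]

theorem countable_of_finite_inter_Iio {T : Set Ω} (hT : ∀ a ∈ T, (T ∩ Iio a).Finite) :
    T.Countable := by
  have hmono : StrictMonoOn (fun a => (T ∩ Iio a).ncard) T := fun a ha b hb hab =>
    ncard_lt_ncard
      ⟨inter_subset_inter_right T (Iio_subset_Iio hab.le), fun h => lt_irrefl a (h ⟨ha, hab⟩).2⟩
      (hT b hb)
  exact (mapsTo_univ _ _).countable_of_injOn hmono.injOn (to_countable univ)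

theorem bddAbove_of_countable [Uncountable Ω] (hIio : ∀ a : Ω, (Iio a).Countable) {T : Set Ω}
    (hT : T.Countable) : BddAbove T := by
  by_contra hunbdd
  have hcover : (univ : Set Ω) ⊆ ⋃ a ∈ T, Iio a := fun b _ => by
    obtain ⟨a, ha, hba⟩ := not_bddAbove_iff.1 hunbdd b
    exact mem_biUnion ha hba
  exact not_countable_univ ((hT.biUnion fun a _ => hIio a).mono hcover)

theorem exists_monotone_cofinal_Iio {a b : Ω} (ha : (Iio a).Countable) (hba : b < a) :
    ∃ c : ℕ → Ω, Monotone c ∧ (∀ n, c n < a) ∧ ∀ ξ < a, ∃ n, ξ ≤ c n := by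
  have : Countable (Iio a) := ha.to_subtype
  have : Nonempty (Iio a) := ⟨⟨b, hba⟩⟩
  obtain ⟨c, hmono, hc⟩ := exists_seq_monotone_tendsto_atTop_atTop (Iio a)
  refine ⟨fun n => c n, fun m n hmn => hmono hmn, fun n => (c n).2, fun ξ hξ => ?_⟩
  obtain ⟨n, hn⟩ := (hc.eventually_ge_atTop ⟨ξ, hξ⟩).exists
  exact ⟨n, hn⟩

end CountableInitialSegments

/-- A ladder system: a choice, for every non-minimal `α`, of a monotone sequence `c α` cofinal in
the points below `α`. The sequence at a minimal `α` is arbitrary. -/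
structure IsLadder {Ω : Type*} [Preorder Ω] (c : Ω → ℕ → Ω) : Prop where
  monotone {ξ α : Ω} (h : ξ < α) : Monotone (c α)
  lt {ξ α : Ω} (h : ξ < α) (n : ℕ) : c α n < α
  exists_le {ξ α : Ω} (h : ξ < α) : ∃ n, ξ ≤ c α n

theorem exists_isLadder {Ω : Type*} [LinearOrder Ω] (hIio : ∀ a : Ω, (Iio a).Countable) :
    ∃ c : Ω → ℕ → Ω, IsLadder c := by
  have (α : Ω) : ∃ c : ℕ → Ω, ∀ ξ < α, Monotone c ∧ (∀ n, c n < α) ∧ ∃ n, ξ ≤ c n := by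
    by_cases h : ∃ β, β < α
    · obtain ⟨β, hβ⟩ := h
      obtain ⟨c, hmono, hlt, hle⟩ := exists_monotone_cofinal_Iio (hIio α) hβ
      exact ⟨c, fun ξ hξ => ⟨hmono, hlt, hle ξ hξ⟩⟩
    · exact ⟨fun _ => α, fun ξ hξ => absurd ⟨ξ, hξ⟩ h⟩
  choose c hc using this
  exact ⟨c, fun h => (hc _ _ h).1, fun h => (hc _ _ h).2.1, fun h => (hc _ _ h).2.2⟩

/-- The `k`-th tree order of a ladder system `c`. These orders increase with `k`, each point has
finitely many predecessors in each of them, and their union is `≤` when `c` is a ladder system.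
The predecessors of `α` are `α` itself and the predecessors of those `c α n`, `n ≤ k`, for which
`c α 0, …, c α n` is a chain of the order. -/
inductive LadderLE {Ω : Type*} [LT Ω] (c : Ω → ℕ → Ω) (k : ℕ) : Ω → Ω → Prop
  | refl (α : Ω) : LadderLE c k α α
  | step {ξ α : Ω} {n : ℕ} (hlt : c α n < α) (hn : n ≤ k)
      (hchain : ∀ i < n, LadderLE c k (c α i) (c α (i + 1))) (hle : LadderLE c k ξ (c α n)) :
      LadderLE c k ξ α

namespace LadderLE

variable {Ω : Type*} [Preorder Ω] {c : Ω → ℕ → Ω} {k l : ℕ} {ξ η α : Ω}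

theorem le (h : LadderLE c k ξ α) : ξ ≤ α := by
  induction h with
  | refl => exact le_rfl
  | step hlt _ _ _ _ ih => exact ih.trans hlt.le

theorem mono (hkl : k ≤ l) (h : LadderLE c k ξ α) : LadderLE c l ξ α := by
  induction h with
  | refl α => exact refl α
  | step hlt hn _ _ ihchain ih => exact step hlt (hn.trans hkl) ihchain ih

theorem trans (hξη : LadderLE c k ξ η) (hηα : LadderLE c k η α) : LadderLE c k ξ α := by
  induction hηα with
  | refl => exact hξη
  | step hlt hn hchain _ _ ih => exact step hlt hn hchain (ih hξη)

theorem of_chain {u : ℕ → Ω} {m n : ℕ} (hmn : m ≤ n)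
    (hu : ∀ i < n, LadderLE c k (u i) (u (i + 1))) : LadderLE c k (u m) (u n) := by
  induction n, hmn using Nat.le_induction with
  | base => exact refl _
  | succ n _ ih => exact (ih fun i hi => hu i (hi.trans n.lt_succ_self)).trans (hu n n.lt_succ_self)

theorem finite_setOf [WellFoundedLT Ω] (c : Ω → ℕ → Ω) (k : ℕ) (α : Ω) :
    {ξ | LadderLE c k ξ α}.Finite := by
  induction α using WellFoundedLT.induction with
  | ind α ih =>
    have hfin : (⋃ n ∈ {n | n ≤ k ∧ c α n < α}, {ξ | LadderLE c k ξ (c α n)}).Finite :=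
      ((finite_le_nat k).subset fun n hn => hn.1).biUnion fun n hn => ih _ hn.2
    refine (hfin.insert α).subset fun ξ hξ => ?_
    cases hξ with
    | refl => exact mem_insert _ _
    | step hlt hn _ hle => exact mem_insert_of_mem _ (mem_biUnion (And.intro hn hlt) hle)

theorem of_le [WellFoundedLT Ω] (hξη : ξ ≤ η) (hξ : LadderLE c k ξ α) (hη : LadderLE c k η α) :
    LadderLE c k ξ η := by
  induction α using WellFoundedLT.induction with
  | ind α ih =>
    cases hη with
    | refl => exact hξ
    | @step _ _ n hn_lt _ hn_chain hηn =>
      cases hξ with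
      | refl => exact absurd (hξη.trans hηn.le) hn_lt.not_ge
      | @step _ _ m hm_lt _ hm_chain hξm =>
        rcases le_total m n with hmn | hnm
        · exact ih _ hn_lt (hξm.trans (of_chain hmn hn_chain)) hηn
        · exact ih _ hm_lt hξm (hηn.trans (of_chain hnm hm_chain))

theorem eventually_of_le {Ω : Type*} [PartialOrder Ω] [WellFoundedLT Ω] {c : Ω → ℕ → Ω}
    {ξ α : Ω} (hc : IsLadder c) (h : ξ ≤ α) : ∀ᶠ k in atTop, LadderLE c k ξ α := by
  induction α using WellFoundedLT.induction generalizing ξ with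
  | ind α ih =>
    rcases h.eq_or_lt with rfl | hlt
    · exact Eventually.of_forall fun k => refl ξ
    obtain ⟨n, hn⟩ := hc.exists_le hlt
    have hchain : ∀ᶠ k in atTop, ∀ i ∈ Iio n, LadderLE c k (c α i) (c α (i + 1)) :=
      (eventually_all_finite (finite_Iio n)).2 fun i _ =>
        ih _ (hc.lt hlt (i + 1)) (hc.monotone hlt i.le_succ)
    filter_upwards [eventually_ge_atTop n, hchain, ih _ (hc.lt hlt n) hn] with k hnk hk hξk
    exact step (hc.lt hlt n) hnk hk hξk

end LadderLE

/-- The least `k` for which `ξ` precedes `α` in the `k`-th tree order, in the role of the function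
`ρ : [ω₁]² → ω` of Todorcevic. It takes the junk value `0` when there is no such `k`. -/
noncomputable def ladderRank {Ω : Type*} [LT Ω] (c : Ω → ℕ → Ω) (ξ α : Ω) : ℕ :=
  sInf {k | LadderLE c k ξ α}

/-- The number of predecessors of `ξ` in the `k`-th tree order. -/
noncomputable def ladderHeight {Ω : Type*} [LT Ω] (c : Ω → ℕ → Ω) (ξ : Ω) (k : ℕ) : ℕ :=
  {ζ | LadderLE c k ζ ξ}.ncard

/-- A coherent sequence of finite-to-one functions: `e · α` restricted to the points below `α` is
finite-to-one, and agrees with `e · β` there up to finitely many points whenever `α ≤ β`. -/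
structure IsCoherent {Ω : Type*} [Preorder Ω] (e : Ω → Ω → ℕ) : Prop where
  finite_fiber (α : Ω) (k : ℕ) : {ξ | ξ < α ∧ e ξ α = k}.Finite
  finite_ne {α β : Ω} (h : α ≤ β) : {ξ | ξ < α ∧ e ξ α ≠ e ξ β}.Finite

namespace IsLadder

section PartialOrder

variable {Ω : Type*} [PartialOrder Ω] [WellFoundedLT Ω] {c : Ω → ℕ → Ω}

theorem ladderRank_le_iff {ξ α : Ω} {k : ℕ} (hc : IsLadder c) (h : ξ ≤ α) :
    ladderRank c ξ α ≤ k ↔ LadderLE c k ξ α :=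
  ⟨fun hk => (Nat.sInf_mem (LadderLE.eventually_of_le hc h).exists).mono hk,
    fun hk => Nat.sInf_le hk⟩

theorem isCoherent_ladderRank (hc : IsLadder c) : IsCoherent (ladderRank c) where
  finite_fiber α k := (LadderLE.finite_setOf c k α).subset fun _ hξ =>
    (hc.ladderRank_le_iff hξ.1.le).1 hξ.2.le
  finite_ne {α β} hαβ := by
    obtain ⟨k, hk⟩ := (LadderLE.eventually_of_le hc hαβ).exists
    refine (LadderLE.finite_setOf c k α).subset fun ξ ⟨hξα, hne⟩ => ?_
    by_contra hξ : ¬LadderLE c k ξ α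
    have hiff : ∀ n, k ≤ n → (LadderLE c n ξ α ↔ LadderLE c n ξ β) := fun n hn =>
      ⟨fun h => h.trans (hk.mono hn), fun h => h.of_le hξα.le (hk.mono hn)⟩
    have hξβ : ¬LadderLE c k ξ β := fun h => hξ ((hiff k le_rfl).2 h)
    rw [← hc.ladderRank_le_iff hξα.le, not_le] at hξ
    rw [← hc.ladderRank_le_iff (hξα.le.trans hαβ), not_le] at hξβ
    refine hne (le_antisymm ?_ ?_)
    · rw [hc.ladderRank_le_iff hξα.le, hiff _ hξβ.le, ← hc.ladderRank_le_iff (hξα.le.trans hαβ)]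
    · rw [hc.ladderRank_le_iff (hξα.le.trans hαβ), ← hiff _ hξ.le, ← hc.ladderRank_le_iff hξα.le]

end PartialOrder

theorem injOn_ladderHeight {Ω : Type*} [LinearOrder Ω] [WellFoundedLT Ω] {c : Ω → ℕ → Ω}
    (hc : IsLadder c) (α : Ω) (k : ℕ) :
    InjOn (fun ξ => ladderHeight c ξ k) {ξ | ξ < α ∧ ladderRank c ξ α ≤ k} := by
  refine StrictMonoOn.injOn fun ξ hξ η hη hlt => ?_
  have hξη : LadderLE c k ξ η := LadderLE.of_le hlt.le
    ((hc.ladderRank_le_iff hξ.1.le).1 hξ.2) ((hc.ladderRank_le_iff hη.1.le).1 hη.2)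
  exact ncard_lt_ncard
    ⟨fun ζ hζ => hζ.trans hξη, fun h => hlt.not_ge (h (LadderLE.refl η)).le⟩
    (LadderLE.finite_setOf c k η)

end IsLadder

/-- The points `z` with `z ∈ C ξ (e ξ α)` for all but finitely many `ξ < α`. When `C ξ k` consists
of the points that assign the value `k` to `ξ`, these are the points that assign to almost every
`ξ < α` its value under `e · α`. -/
def almostCoding {Ω Z : Type*} [LT Ω] (e : Ω → Ω → ℕ) (C : Ω → ℕ → Set Z) (α : Ω) : Set Z :=
  {z | {ξ | ξ < α ∧ z ∉ C ξ (e ξ α)}.Finite}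

section AlmostCoding

variable {Ω Z : Type*} {e : Ω → Ω → ℕ} {C : Ω → ℕ → Set Z}

theorem isGδ_compl_almostCoding [Preorder Ω] [TopologicalSpace Z] (hC : ∀ ξ k, IsClosed (C ξ k))
    {α : Ω} (hα : (Iio α).Countable) : IsGδ (almostCoding e C α)ᶜ := by
  have hcompl : (almostCoding e C α)ᶜ =
      ⋂ s ∈ {s : Set Ω | s.Finite ∧ s ⊆ Iio α}, (⋂ ξ ∈ Iio α \ s, C ξ (e ξ α))ᶜ := by
    rw [← compl_iUnion₂]
    congr 1
    ext z
    simp only [almostCoding, mem_ofPred_eq, mem_iUnion, mem_iInter, exists_prop]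
    refine ⟨fun hz => ⟨_, ⟨hz, fun ξ hξ => hξ.1⟩, fun ξ hξ => ?_⟩, ?_⟩
    · by_contra hzξ
      exact hξ.2 ⟨hξ.1, hzξ⟩
    · rintro ⟨s, ⟨hs, -⟩, hz⟩
      refine hs.subset fun ξ ⟨hξα, hzξ⟩ => ?_
      by_contra hξs
      exact hzξ (hz ξ ⟨hξα, hξs⟩)
  rw [hcompl]
  exact IsGδ.biInter_of_isOpen (countable_ofPred_finite_subset hα) fun s _ =>
    (isClosed_biInter fun ξ _ => hC ξ _).isOpen_compl

theorem IsCoherent.antitone_almostCoding [Preorder Ω] (he : IsCoherent e) :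
    Antitone (almostCoding e C) := by
  intro α β hαβ z hz
  refine (hz.union (he.finite_ne hαβ)).subset fun ξ ⟨hξα, hzξ⟩ => ?_
  by_cases heq : e ξ α = e ξ β
  · exact Or.inl ⟨hξα.trans_le hαβ, heq ▸ hzξ⟩
  · exact Or.inr ⟨hξα, heq⟩

theorem IsCoherent.iInter_almostCoding_eq_empty [LinearOrder Ω] [Uncountable Ω] (he : IsCoherent e)
    (hC : ∀ ξ, Pairwise (Disjoint on C ξ)) : ⋂ α, almostCoding e C α = ∅ := by
  refine eq_empty_iff_forall_notMem.2 fun z hz => ?_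
  set B : ℕ → Set Ω := fun k => {ξ | ∀ l, z ∈ C ξ l → l = k}
  have hB (k : ℕ) : (B k).Countable := countable_of_finite_inter_Iio fun α _ => by
    refine ((mem_iInter.1 hz α).union (he.finite_fiber α k)).subset fun ξ ⟨hξ, hξα⟩ => ?_
    by_cases hzξ : z ∈ C ξ (e ξ α)
    · exact Or.inr ⟨hξα, hξ _ hzξ⟩
    · exact Or.inl ⟨hξα, hzξ⟩
  have hcover : (univ : Set Ω) ⊆ ⋃ k, B k := fun ξ _ => by
    by_cases h : ∃ k, z ∈ C ξ k
    · obtain ⟨k, hk⟩ := h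
      exact mem_iUnion.2 ⟨k, fun l hl => (hC ξ).eq (not_disjoint_iff.2 ⟨z, hl, hk⟩)⟩
    · exact mem_iUnion.2 ⟨0, fun l hl => absurd ⟨l, hl⟩ h⟩
  exact not_countable_univ ((countable_iUnion hB).mono hcover)

end AlmostCoding

/-- The points of the Cantor set, read as subsets of `ω³`, whose fibre over `(m, t m)` is `{k}` for
all `m ≥ k`. The value `k` is thus recorded along the graph of `t`. -/
def recordingSet (t : ℕ → ℕ) (k : ℕ) : Set (ℕ → Bool) :=
  {g | ∀ m ≥ k, ∀ j, g (Encodable.encode (m, t m, j)) = decide (j = k)}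

theorem isClosed_recordingSet (t : ℕ → ℕ) (k : ℕ) : IsClosed (recordingSet t k) := by
  simp only [recordingSet, ofPred_forall]
  exact isClosed_iInter fun m => isClosed_iInter fun _ => isClosed_iInter fun j =>
    isClosed_eq (continuous_apply _) continuous_const

theorem pairwise_disjoint_recordingSet (t : ℕ → ℕ) : Pairwise (Disjoint on recordingSet t) := by
  refine fun k l hkl => disjoint_left.2 fun g hk hl => hkl ?_
  have := (hk (max k l) (le_max_left k l) k).symm.trans (hl (max k l) (le_max_right k l) k)
  simpa using this

theorem nonempty_iInter_recordingSet {ι : Type*} {t : ι → ℕ → ℕ} {e : ι → ℕ}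
    (ht : ∀ m, InjOn (fun i => t i m) {i | e i ≤ m}) :
    (⋂ i, recordingSet (t i) (e i)).Nonempty := by
  classical
  refine ⟨fun p => decide (∃ i, ∃ m ≥ e i, Encodable.encode (m, t i m, e i) = p),
    mem_iInter.2 fun i m hm j => decide_eq_decide.2 ⟨?_, ?_⟩⟩
  · rintro ⟨i', m', hm', heq⟩
    obtain ⟨rfl, htm, rfl⟩ : m' = m ∧ t i' m' = t i m ∧ e i' = j := by
      simpa using heq
    rw [ht m' hm' hm htm]
  · rintro rfl
    exact ⟨i, m, hm, rfl⟩

theorem exists_isGδ_preimage_eq_of_isInducing {Y Z : Type*} [TopologicalSpace Y]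
    [TopologicalSpace Z] {f : Y → Z} (hf : IsInducing f) {s : Set Y} (hs : IsGδ s) :
    ∃ t, IsGδ t ∧ f ⁻¹' t = s := by
  obtain ⟨u, hu, rfl⟩ := isGδ_iff_eq_iInter_nat.1 hs
  choose v hv hvu using fun n => hf.isOpen_iff.1 (hu n)
  exact ⟨⋂ n, v n, .iInter_of_isOpen hv, by simp only [preimage_iInter, hvu]⟩

theorem isLambdaPrimeSet_iff {X : Set (ℕ → Bool)} :
    IsLambdaPrimeSet X ↔
      ∀ D : Set (ℕ → Bool), D.Countable → ∃ G, IsGδ G ∧ D ⊆ G ∧ (X ∩ G).Countable := by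
  refine ⟨fun hX D hD => ?_, fun hX D hD C hC => ?_⟩
  · obtain ⟨G, hG, hGD⟩ := exists_isGδ_preimage_eq_of_isInducing .subtypeVal
      (hX D hD _ (hD.preimage Subtype.val_injective))
    have hmem (x : ℕ → Bool) (hx : x ∈ X ∪ D) : x ∈ G ↔ x ∈ D := Set.ext_iff.1 hGD ⟨x, hx⟩
    exact ⟨G, hG, fun x hx => (hmem x (Or.inr hx)).2 hx,
      hD.mono fun x hx => (hmem x (Or.inl hx.1)).1 hx.2⟩
  · obtain ⟨G, hG, hsub, hXG⟩ := hX (D ∪ Subtype.val '' C) (hD.union (hC.image _))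
    have hpre : IsGδ ((↑) ⁻¹' G : Set ↥(X ∪ D)) := hG.preimage continuous_subtype_val
    have hcount : ((↑) ⁻¹' G : Set ↥(X ∪ D)).Countable :=
      ((hXG.union hD).preimage Subtype.val_injective).mono fun x hx =>
        x.2.imp (fun hxX => ⟨hxX, hx⟩) id
    have hC_eq : C = (↑) ⁻¹' G ∩ ((↑) ⁻¹' G \ C)ᶜ := by
      have : C ⊆ (↑) ⁻¹' G := fun x hx => hsub (Or.inr (mem_image_of_mem _ hx))
      rw [← Set.sdiff_eq, sdiff_sdiff_cancel_left this]
    rw [hC_eq]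
    exact hpre.inter (hcount.mono sdiff_subset).isGδ_compl

namespace IsLambdaPrimeSet

theorem iUnion {ι : Type*} [Countable ι] {X : ι → Set (ℕ → Bool)}
    (hX : ∀ i, IsLambdaPrimeSet (X i)) : IsLambdaPrimeSet (⋃ i, X i) := by
  refine isLambdaPrimeSet_iff.2 fun D hD => ?_
  choose G hG hDG hXG using fun i => isLambdaPrimeSet_iff.1 (hX i) D hD
  refine ⟨⋂ i, G i, IsGδ.iInter hG, subset_iInter hDG, ?_⟩
  rw [iUnion_inter]
  exact countable_iUnion fun i =>
    (hXG i).mono (inter_subset_inter_right _ (iInter_subset G i))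

theorem preimage {X : Set (ℕ → Bool)} (hX : IsLambdaPrimeSet X) {f : (ℕ → Bool) → ℕ → Bool}
    (hf : Continuous f) (hfiber : ∀ y, (f ⁻¹' {y}).Countable) : IsLambdaPrimeSet (f ⁻¹' X) := by
  refine isLambdaPrimeSet_iff.2 fun D hD => ?_
  obtain ⟨G, hG, hDG, hXG⟩ := isLambdaPrimeSet_iff.1 hX (f '' D) (hD.image f)
  refine ⟨f ⁻¹' G, hG.preimage hf, image_subset_iff.1 hDG, ?_⟩
  rw [← preimage_inter, ← biUnion_preimage_singleton]
  exact hXG.biUnion fun y _ => hfiber y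

end IsLambdaPrimeSet

theorem uncountable_of_mk_eq_aleph_one {Ω : Type*} (hΩ : #Ω = ℵ₁) : Uncountable Ω := by
  rw [← aleph0_lt_mk_iff, hΩ]
  exact aleph0_lt_aleph_one

theorem exists_isLambdaPrimeSet_of_antitone {Ω : Type} [LinearOrder Ω] (hΩ : #Ω = ℵ₁)
    (hIio : ∀ a : Ω, (Iio a).Countable) {F : Ω → Set (ℕ → Bool)} (hanti : Antitone F)
    (hGδ : ∀ α, IsGδ (F α)ᶜ) (hne : ∀ α, (F α).Nonempty) (hF : ⋂ α, F α = ∅) :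
    ∃ X : Set (ℕ → Bool), IsLambdaPrimeSet X ∧ #X = ℵ₁ := by
  have : Uncountable Ω := uncountable_of_mk_eq_aleph_one hΩ
  have hcompl (D : Set (ℕ → Bool)) (hD : D.Countable) : ∃ α, D ⊆ (F α)ᶜ := by
    have hnotMem : ∀ g, ∃ α, g ∉ F α := by simpa [eq_empty_iff_forall_notMem] using hF
    choose a ha using hnotMem
    obtain ⟨b, hb⟩ := bddAbove_of_countable hIio (hD.image a)
    exact ⟨b, fun g hg hgb => ha g (hanti (hb (mem_image_of_mem a hg)) hgb)⟩
  choose x hx using hne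
  refine ⟨range x, isLambdaPrimeSet_iff.2 fun D hD => ?_, le_antisymm (hΩ ▸ mk_range_le) ?_⟩
  · obtain ⟨α, hα⟩ := hcompl D hD
    refine ⟨(F α)ᶜ, hGδ α, hα, ((hIio α).image x).mono ?_⟩
    rintro _ ⟨⟨β, rfl⟩, hβ⟩
    exact ⟨β, lt_of_not_ge fun hαβ => hβ (hanti hαβ (hx β)), rfl⟩
  · rw [← succ_aleph0, Order.succ_le_iff, ← not_le, le_aleph0_iff_set_countable]
    intro hcount
    obtain ⟨α, hα⟩ := hcompl _ hcount
    exact hα (mem_range_self α) (hx α)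

theorem exists_linearOrder_mk_eq_aleph_one_countable_Iio :
    ∃ (Ω : Type) (_ : LinearOrder Ω) (_ : WellFoundedLT Ω),
      #Ω = ℵ₁ ∧ ∀ a : Ω, (Iio a).Countable := by
  refine ⟨(ℵ₁ : Cardinal.{0}).ord.ToType, inferInstance, inferInstance, by simp, fun a => ?_⟩
  rw [← le_aleph0_iff_set_countable, ← Order.lt_succ_iff, succ_aleph0]
  simpa using mk_Iio_lt a

theorem exists_isLambdaPrimeSet_mk_eq_aleph_one :
    ∃ X : Set (ℕ → Bool), IsLambdaPrimeSet X ∧ #X = ℵ₁ := by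
  obtain ⟨Ω, _, _, hΩ, hIio⟩ := exists_linearOrder_mk_eq_aleph_one_countable_Iio
  have : Uncountable Ω := uncountable_of_mk_eq_aleph_one hΩ
  obtain ⟨c, hc⟩ := exists_isLadder hIio
  let C : Ω → ℕ → Set (ℕ → Bool) := fun ξ => recordingSet (ladderHeight c ξ)
  have hcoherent := hc.isCoherent_ladderRank
  refine exists_isLambdaPrimeSet_of_antitone hΩ hIio (F := almostCoding (ladderRank c) C)
    hcoherent.antitone_almostCoding
    (fun α => isGδ_compl_almostCoding (fun ξ => isClosed_recordingSet _) (hIio α)) (fun α => ?_)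
    (hcoherent.iInter_almostCoding_eq_empty fun ξ => pairwise_disjoint_recordingSet _)
  obtain ⟨g, hg⟩ : (⋂ ξ : Iio α, C ξ (ladderRank c ξ α)).Nonempty :=
    nonempty_iInter_recordingSet fun m ξ hξ η hη h =>
      Subtype.ext (hc.injOn_ladderHeight α m ⟨ξ.2, hξ⟩ ⟨η.2, hη⟩ h)
  refine ⟨g, finite_empty.subset fun ξ ⟨hξα, hgξ⟩ => hgξ (mem_iInter.1 hg ⟨ξ, hξα⟩)⟩

section Prepend

variable {A : Type*} {n : ℕ}

/-- The concatenation `s⌢y` of a finite and an infinite word. -/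
def prepend (s : Fin n → A) (y : ℕ → A) (k : ℕ) : A :=
  if h : k < n then s ⟨k, h⟩ else y (k - n)

@[simp]
theorem prepend_add (s : Fin n → A) (y : ℕ → A) (k : ℕ) : prepend s y (n + k) = y k := by
  simp [prepend]

theorem prepend_restrict (x : ℕ → A) (n : ℕ) :
    prepend (fun i : Fin n => x i) (fun k => x (n + k)) = x := by
  ext k
  by_cases h : k < n
  · simp [prepend, h]
  · simp [prepend, h, Nat.add_sub_cancel' (not_lt.1 h)]

theorem range_prepend (s : Fin n → A) (y : ℕ → A) :
    range (prepend s) = PiNat.cylinder (prepend s y) n := by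
  ext x
  refine ⟨?_, fun hx => ⟨fun k => x (n + k), ?_⟩⟩
  · rintro ⟨z, rfl⟩ i hi
    simp [prepend, hi]
  · have hs : s = fun i : Fin n => x i := by
      ext i
      simp [hx i i.2, prepend]
    rw [hs, prepend_restrict]

variable [TopologicalSpace A]

theorem continuous_prepend (s : Fin n → A) : Continuous (prepend s) := by
  refine continuous_pi fun k => ?_
  by_cases h : k < n
  · simpa only [prepend, h, dif_pos] using continuous_const
  · simpa only [prepend, h, dif_neg, not_false_iff] using continuous_apply _

theorem isClosedEmbedding_prepend [T2Space A] (s : Fin n → A) : IsClosedEmbedding (prepend s) :=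
  LeftInverse.isClosedEmbedding (f := fun x k => x (n + k)) (fun y => by ext k; simp)
    (continuous_pi fun _ => continuous_apply _) (continuous_prepend s)

theorem hHomEmbedded_of_prepend_mem_iff [DiscreteTopology A] [Nonempty A] {X : Set (ℕ → A)}
    (hX : ∀ (n : ℕ) (s : Fin n → A) (y : ℕ → A), prepend s y ∈ X ↔ y ∈ X) : HHomEmbedded X := by
  refine ⟨{U | ∃ (n : ℕ) (s : Fin n → A), range (prepend s) = U}, ?_, fun V hV ⟨x, hx⟩ => ?_, ?_⟩
  · rintro _ ⟨n, s, rfl⟩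
    refine ⟨⟨(isClosedEmbedding_prepend s).isClosed_range, ?_⟩, range_nonempty _⟩
    rw [range_prepend s (Classical.arbitrary _)]
    exact PiNat.isOpen_cylinder _ _ n
  · obtain ⟨_, ⟨y, n, rfl⟩, -, hyV⟩ :=
      (PiNat.isTopologicalBasis_cylinders fun _ : ℕ => A).exists_subset_of_mem_open hx hV
    refine ⟨_, ⟨n, fun i => y i, rfl⟩, ?_⟩
    rwa [range_prepend _ fun k => y (n + k), prepend_restrict]
  · rintro _ ⟨n, s, rfl⟩
    refine ⟨(isClosedEmbedding_prepend s).isEmbedding.toHomeomorph, ?_⟩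
    have hpre : prepend s ⁻¹' X = X := ext fun y => hX n s y
    calc Subtype.val '' ((isClosedEmbedding_prepend s).isEmbedding.toHomeomorph '' X)
        = prepend s '' (prepend s ⁻¹' X) := by rw [hpre, ← image_comp]; rfl
      _ = X ∩ range (prepend s) := image_preimage_eq_inter_range

end Prepend

/-- Tail equivalence `E_t` of infinite words: equality after deleting suitable finite prefixes,
possibly of different lengths. -/
def TailEquiv {A : Type*} (x y : ℕ → A) : Prop :=
  ∃ m n, ∀ k, x (m + k) = y (n + k)

/-- The set of all words tail equivalent to a word in `X`. -/
def tailSaturation {A : Type*} (X : Set (ℕ → A)) : Set (ℕ → A) :=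
  {x | ∃ z ∈ X, TailEquiv x z}

/-- Deletes the first `q.2` letters of `y` and prepends the word `q.1`. These countably many maps
generate tail equivalence. -/
def replacePrefix {A : Type*} (q : (Σ n, Fin n → A) × ℕ) (y : ℕ → A) : ℕ → A :=
  prepend q.1.2 fun k => y (q.2 + k)

section TailEquiv

variable {A : Type*} {x y : ℕ → A}

theorem TailEquiv.refl (x : ℕ → A) : TailEquiv x x :=
  ⟨0, 0, fun _ => rfl⟩

theorem TailEquiv.symm (h : TailEquiv x y) : TailEquiv y x := by
  obtain ⟨m, n, h⟩ := h
  exact ⟨n, m, fun k => (h k).symm⟩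

theorem tailEquiv_comm : TailEquiv x y ↔ TailEquiv y x :=
  ⟨TailEquiv.symm, TailEquiv.symm⟩

theorem tailEquiv_prepend_iff {n : ℕ} {s : Fin n → A} :
    TailEquiv (prepend s x) y ↔ TailEquiv x y := by
  constructor
  · rintro ⟨m, l, h⟩
    refine ⟨m, l + n, fun k => ?_⟩
    rw [add_assoc, ← h, Nat.add_left_comm, prepend_add]
  · rintro ⟨m, l, h⟩
    exact ⟨n + m, l, fun k => by rw [add_assoc, prepend_add, h]⟩

theorem tailEquiv_iff_exists_replacePrefix : TailEquiv x y ↔ ∃ q, replacePrefix q y = x := by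
  constructor
  · rintro ⟨m, n, h⟩
    refine ⟨⟨⟨m, fun i => x i⟩, n⟩, ?_⟩
    simp only [replacePrefix, ← h, prepend_restrict]
  · rintro ⟨⟨⟨m, s⟩, n⟩, rfl⟩
    exact ⟨m, n, fun k => by simp [replacePrefix]⟩

theorem continuous_replacePrefix [TopologicalSpace A] (q : (Σ n, Fin n → A) × ℕ) :
    Continuous (replacePrefix q) :=
  (continuous_prepend q.1.2).comp (continuous_pi fun _ => continuous_apply _)

theorem countable_replacePrefix_preimage_singleton [Countable A] (q : (Σ n, Fin n → A) × ℕ)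
    (y : ℕ → A) : (replacePrefix q ⁻¹' {y}).Countable :=
  (countable_range fun q' => replacePrefix q' y).mono fun _ hx =>
    tailEquiv_iff_exists_replacePrefix.1 (tailEquiv_iff_exists_replacePrefix.2 ⟨q, hx⟩).symm

theorem tailSaturation_eq_iUnion_image (X : Set (ℕ → A)) :
    tailSaturation X = ⋃ q, replacePrefix q '' X := by
  ext x
  simp only [tailSaturation, tailEquiv_iff_exists_replacePrefix, mem_ofPred_eq, mem_iUnion,
    mem_image]
  tauto

theorem tailSaturation_eq_iUnion_preimage (X : Set (ℕ → A)) :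
    tailSaturation X = ⋃ q, replacePrefix q ⁻¹' X := by
  ext x
  have hx (z : ℕ → A) : TailEquiv x z ↔ ∃ q, replacePrefix q x = z :=
    tailEquiv_comm.trans tailEquiv_iff_exists_replacePrefix
  simp only [tailSaturation, hx, mem_ofPred_eq, mem_iUnion, mem_preimage]
  exact ⟨fun ⟨_, hz, q, hq⟩ => ⟨q, hq ▸ hz⟩, fun ⟨q, hq⟩ => ⟨_, hq, q, rfl⟩⟩

theorem mk_tailSaturation [Countable A] {X : Set (ℕ → A)} (hX : X.Infinite) :
    #(tailSaturation X) = #X := by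
  have haleph0 : ℵ₀ ≤ #X := infinite_iff.1 hX.to_subtype
  refine le_antisymm ?_ (mk_le_mk_of_subset fun x hx => ⟨x, hx, TailEquiv.refl x⟩)
  calc #(tailSaturation X)
      ≤ #((Σ n, Fin n → A) × ℕ) * ⨆ q, #(replacePrefix q '' X) := by
        rw [tailSaturation_eq_iUnion_image]
        exact mk_iUnion_le _
    _ ≤ ℵ₀ * #X := mul_le_mul' mk_le_aleph0 (ciSup_le' fun q => mk_image_le)
    _ = #X := aleph0_mul_eq haleph0

theorem hHomEmbedded_tailSaturation [TopologicalSpace A] [DiscreteTopology A] [Nonempty A]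
    (X : Set (ℕ → A)) : HHomEmbedded (tailSaturation X) :=
  hHomEmbedded_of_prepend_mem_iff fun _ _ _ => by
    simp only [tailSaturation, mem_ofPred_eq, tailEquiv_prepend_iff]

theorem IsLambdaPrimeSet.tailSaturation {X : Set (ℕ → Bool)} (hX : IsLambdaPrimeSet X) :
    IsLambdaPrimeSet (tailSaturation X) := by
  rw [tailSaturation_eq_iUnion_preimage]
  exact IsLambdaPrimeSet.iUnion fun q => hX.preimage (continuous_replacePrefix q)
    (countable_replacePrefix_preimage_singleton q)

end TailEquiv

/-- There exists a λ'-set of cardinality `ω₁` which is h-homogeneously embedded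
in the Cantor set `2^ω`. -/
theorem statement13 :
    ∃ X : Set (ℕ → Bool), IsLambdaPrimeSet X ∧
      Cardinal.mk X = Cardinal.aleph 1 ∧ HHomEmbedded X := by
  obtain ⟨X, hX, hcard⟩ := exists_isLambdaPrimeSet_mk_eq_aleph_one
  have hinf : X.Infinite := by
    rw [← infinite_coe_iff, infinite_iff, hcard]
    exact aleph0_le_aleph 1
  exact ⟨tailSaturation X, hX.tailSaturation, (mk_tailSaturation hinf).trans hcard,
    hHomEmbedded_tailSaturation X⟩
end

section
/- Let X be a zero-dimensional separable metrizable space with at least two points. Then the following are equivalent: (1) X^ω is homeomorphic to Y^ω for some separable metrizable space Y having at least one isolated point; (2) X^ω can be h-homogeneously embedded in the Cantor set 2^ω; (3) X^ω is h-homogeneous. -/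
/-- A space is zero-dimensional if it has a base consisting of clopen sets. -/
def ZeroDimensional (X : Type*) [TopologicalSpace X] : Prop :=
  ∀ (x : X) (U : Set X), IsOpen U → x ∈ U → ∃ C : Set X, IsClopen C ∧ x ∈ C ∧ C ⊆ U
/-- A space `X` is h-homogeneous if every non-empty clopen subspace of `X` is
homeomorphic to `X`. -/
def HHomogeneous (X : Type*) [TopologicalSpace X] : Prop :=
  ∀ C : Set X, IsClopen C → C.Nonempty → Nonempty (C ≃ₜ X)

/-!
Suppose that `z` is an isolated point of `Z`. If the copies `A_k` of a clopen set `D ⊆ N` are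
disjoint and converge to a point of `N`, then `N ⊕ D ≃ N`: move `D` to `A_0` and each `A_k` to
`A_{k+1}`. In `Z^ω` the sets of sequences that enter `V` for the first time after a run of `k`
entries `z` provide such copies, and by carrying this out coordinatewise over `(Z^ω)^ω`, with rings
`B_k \ B_{k+1}` of a clopen neighbourhood basis in the role of `V`, one absorbs the clopen factor
`B_0`: `B_0 × Z^ω ≃ Z^ω`. Hence every basic cylinder contains a clopen copy of `Z^ω`, and all maps
can be chosen to respect `A^ω` when `A` is a dense subset of `Z` containing `z`.
If a space without isolated points has a π-base of clopen copies of itself, then each non-empty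
clopen subset `C` contains a sequence of copies converging to a point, so that it absorbs the whole
space and the space absorbs `C`; thus `C ≃ N ⊕ C ≃ N`.

Conversely, if `X^ω` is h-homogeneous, then `(1 ⊕ X^ω)^ω ≃ X^ω`, by absorption and since
`X^ω ⊕ X^ω ≃ X^ω`. Here `1 ⊕ X^ω` has an isolated point. Moreover `X^ω` embeds densely into `2^ω`,
so that `(1 ⊕ X^ω)^ω` is h-homogeneously embedded in `(1 ⊕ 2^ω)^ω ≃ 2^ω`.
-/

open Set Filter Topology TopologicalSpace

namespace ZeroDimensional

variable {X Y : Type*} [TopologicalSpace X] [TopologicalSpace Y]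

theorem of_isInducing {f : X → Y} (hf : IsInducing f) (h : ZeroDimensional Y) :
    ZeroDimensional X := by
  intro x U hU hx
  obtain ⟨V, hV, rfl⟩ := hf.isOpen_iff.1 hU
  obtain ⟨C, hC, hxC, hCV⟩ := h (f x) V hV hx
  exact ⟨f ⁻¹' C, hC.preimage hf.continuous, hxC, preimage_mono hCV⟩

theorem of_discreteTopology [DiscreteTopology X] : ZeroDimensional X :=
  fun x _ _ hx => ⟨{x}, isClopen_discrete _, rfl, singleton_subset_iff.2 hx⟩

theorem pi {ι : Type*} {X : ι → Type*} [∀ i, TopologicalSpace (X i)]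
    (h : ∀ i, ZeroDimensional (X i)) : ZeroDimensional (∀ i, X i) := by
  intro x U hU hx
  obtain ⟨I, u, hu, hIu⟩ := isOpen_pi_iff.1 hU x hx
  choose! C hC hxC hCu using fun i (hi : i ∈ I) => h i (x i) (u i) (hu i hi).1 (hu i hi).2
  exact ⟨(I : Set ι).pi C,
    ⟨isClosed_set_pi fun i hi => (hC i hi).isClosed,
      isOpen_set_pi I.finite_toSet fun i hi => (hC i hi).isOpen⟩,
    hxC, (pi_mono hCu).trans hIu⟩

theorem sum (hX : ZeroDimensional X) (hY : ZeroDimensional Y) : ZeroDimensional (X ⊕ Y) := by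
  rintro (x | y) U hU hxU
  · obtain ⟨C, hC, hxC, hCU⟩ := hX x _ (hU.preimage continuous_inl) hxU
    exact ⟨Sum.inl '' C, ⟨IsClosedEmbedding.inl.isClosedMap _ hC.isClosed,
      isOpenMap_inl _ hC.isOpen⟩, mem_image_of_mem _ hxC, image_subset_iff.2 hCU⟩
  · obtain ⟨C, hC, hyC, hCU⟩ := hY y _ (hU.preimage continuous_inr) hxU
    exact ⟨Sum.inr '' C, ⟨IsClosedEmbedding.inr.isClosedMap _ hC.isClosed,
      isOpenMap_inr _ hC.isOpen⟩, mem_image_of_mem _ hyC, image_subset_iff.2 hCU⟩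

theorem exists_antitone_basis_nhds [FirstCountableTopology X] (h : ZeroDimensional X) {x : X}
    {V : Set X} (hV : IsClopen V) (hx : x ∈ V) :
    ∃ B : ℕ → Set X, B 0 = V ∧ (∀ k, IsClopen (B k)) ∧ (𝓝 x).HasAntitoneBasis B := by
  have hbasis : (𝓝 x).HasBasis (fun C => (x ∈ C ∧ IsClopen C) ∧ C ⊆ V) id := by
    refine HasBasis.restrict_subset ⟨fun t => ⟨fun ht => ?_, ?_⟩⟩ (hV.isOpen.mem_nhds hx)
    · obtain ⟨C, hC, hxC, hCt⟩ := h x _ isOpen_interior (mem_interior_iff_mem_nhds.2 ht)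
      exact ⟨C, ⟨hxC, hC⟩, hCt.trans interior_subset⟩
    · rintro ⟨C, ⟨hxC, hC⟩, hCt⟩
      exact mem_of_superset (hC.isOpen.mem_nhds hxC) hCt
  obtain ⟨B, hB, hBx⟩ := hbasis.exists_antitone_subbasis
  refine ⟨fun | 0 => V | k + 1 => B k, rfl, fun | 0 => hV | k + 1 => (hB k).1.2, ⟨⟨fun t => ?_⟩,
    antitone_nat_of_succ_le fun | 0 => (hB 0).2 | k + 1 => hBx.antitone k.le_succ⟩⟩
  refine hBx.mem_iff.trans ⟨fun ⟨k, hk⟩ => ⟨k + 1, trivial, hk⟩, fun ⟨k, _, hk⟩ => ⟨k, ?_⟩⟩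
  cases k with
  | zero => exact (hB 0).2.trans hk
  | succ k => exact (hBx.antitone k.le_succ).trans hk

end ZeroDimensional

section General

variable {X Y : Type*} [TopologicalSpace X] [TopologicalSpace Y]

theorem continuous_ite_of_isClopen {p : X → Prop} [DecidablePred p] (hp : IsClopen {x | p x})
    {f g : X → Y} (hf : Continuous f) (hg : Continuous g) :
    Continuous fun x => if p x then f x else g x :=
  hf.if (fun x hx => by simp [hp.frontier_eq] at hx) hg

/-- Two open embeddings with disjoint ranges identify the topological sum with the union of the
ranges. -/
noncomputable def sumHomeomorphUnionRange {Z : Type*} [TopologicalSpace Z] {f : X → Z} {g : Y → Z}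
    (hf : IsOpenEmbedding f) (hg : IsOpenEmbedding g) (h : Disjoint (range f) (range g)) :
    X ⊕ Y ≃ₜ (range f ∪ range g : Set Z) :=
  (hf.sumElim hg
    (hf.injective.sumElim hg.injective fun _ _ => (h.ne_of_mem ⟨_, rfl⟩ ⟨_, rfl⟩ ·))).isEmbedding
    |>.toHomeomorph.trans (.setCongr (Sum.elim_range f g))

theorem nonempty_sum_compl_homeomorph {C : Set X} (hC : IsClopen C) :
    Nonempty (C ⊕ (Cᶜ : Set X) ≃ₜ X) :=
  ⟨(sumHomeomorphUnionRange hC.isOpen.isOpenEmbedding_subtypeVal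
    hC.compl.isOpen.isOpenEmbedding_subtypeVal (by
      simpa only [Subtype.range_coe] using disjoint_compl_right)).trans
    ((Homeomorph.setCongr (by simp only [Subtype.range_coe, union_compl_self])).trans
      (Homeomorph.Set.univ X))⟩

end General

section ConvergingCopies

/-- The maps `w k : D → N` embed `D` onto pairwise disjoint clopen sets that converge to `p`. -/
structure ConvergingCopies {N D : Type*} [TopologicalSpace N] [TopologicalSpace D] (w : ℕ → D → N)
    (p : N) : Prop where
  isOpenEmbedding (k : ℕ) : IsOpenEmbedding (w k)
  isClosed_range (k : ℕ) : IsClosed (range (w k))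
  disjoint_range : Pairwise (Function.onFun Disjoint fun k => range (w k))
  tendsto : Tendsto (fun k => range (w k)) atTop (𝓝 p).smallSets

namespace ConvergingCopies

section Maps

variable {N D : Type*} {w : ℕ → D → N}

theorem extend_apply_of_notMem {M : Type*} {a : ℕ → D → M} {c : N → M} {x : N}
    (hx : ∀ k, x ∉ range (w k)) :
    Function.extend (Function.uncurry w) (Function.uncurry a) c x = c x :=
  Function.extend_apply' _ _ _ fun ⟨⟨k, d⟩, hkd⟩ => hx k ⟨d, hkd⟩

variable (w) in
/-- The Hilbert hotel map of a converging sequence of copies: it moves the `k`-th copy onto the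
next one and fixes everything else, so that only the `0`-th copy is vacated. -/
noncomputable def push : N → N :=
  Function.extend (Function.uncurry w) (Function.uncurry fun k => w (k + 1)) id

variable (w) in
/-- The left inverse of `push`: it moves every copy onto the previous one, and fixes the `0`-th
copy because `0 - 1 = 0`. -/
noncomputable def pull : N → N :=
  Function.extend (Function.uncurry w) (Function.uncurry fun k => w (k - 1)) id

theorem push_of_notMem {x : N} (hx : ∀ k, x ∉ range (w k)) : push w x = x :=
  extend_apply_of_notMem hx

theorem pull_of_notMem {x : N} (hx : ∀ k, x ∉ range (w k)) : pull w x = x :=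
  extend_apply_of_notMem hx

end Maps

variable {N D : Type*} [TopologicalSpace N] [TopologicalSpace D] {w : ℕ → D → N} {p : N}

theorem injective_uncurry (h : ConvergingCopies w p) : (Function.uncurry w).Injective := by
  rintro ⟨k, d⟩ ⟨l, e⟩ (hde : w k d = w l e)
  obtain rfl : k = l := h.disjoint_range.eq (not_disjoint_iff.2 ⟨_, ⟨d, rfl⟩, ⟨e, hde.symm⟩⟩)
  rw [(h.isOpenEmbedding k).injective hde]

theorem extend_apply {M : Type*} (h : ConvergingCopies w p) (a : ℕ → D → M) (c : N → M)
    (k : ℕ) (d : D) :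
    Function.extend (Function.uncurry w) (Function.uncurry a) c (w k d) = a k d :=
  h.injective_uncurry.extend_apply (Function.uncurry a) c (k, d)

theorem eventually_notMem_range (h : ConvergingCopies w p) {x : N} (hx : ∀ k, x ∉ range (w k))
    (n : ℕ) : ∀ᶠ y in 𝓝 x, ∀ k < n, y ∉ range (w k) :=
  (eventually_all_finite (finite_lt_nat n)).2 fun k _ =>
    (h.isClosed_range k).isOpen_compl.mem_nhds (hx k)

theorem continuous_extend {M : Type*} [TopologicalSpace M] [T2Space N]
    (h : ConvergingCopies w p) {a : ℕ → D → M} {c : N → M}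
    (ha : ∀ k, Continuous (a k)) (hc : Continuous c)
    (hac : Tendsto (fun k => range (a k)) atTop (𝓝 (c p)).smallSets) :
    Continuous (Function.extend (Function.uncurry w) (Function.uncurry a) c) := by
  refine continuous_iff_continuousAt.2 fun x => ?_
  by_cases hx : ∃ k, x ∈ range (w k)
  · obtain ⟨k, d, rfl⟩ := hx
    rw [← (h.isOpenEmbedding k).continuousAt_iff]
    exact (ha k).continuousAt.congr (.of_forall fun e => (h.extend_apply a c k e).symm)
  push Not at hx
  rcases eq_or_ne x p with rfl | hxp
  · rw [ContinuousAt, extend_apply_of_notMem hx]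
    refine tendsto_def.2 fun V hV => ?_
    obtain ⟨n, hn⟩ := eventually_atTop.1 (tendsto_smallSets_iff.1 hac V hV)
    filter_upwards [h.eventually_notMem_range hx n, hc.continuousAt.preimage_mem_nhds hV]
      with y hy hcy
    by_cases hyw : ∃ k, y ∈ range (w k)
    · obtain ⟨k, d, rfl⟩ := hyw
      rw [mem_preimage, h.extend_apply]
      exact hn k (not_lt.1 fun hkn => hy k hkn ⟨d, rfl⟩) ⟨d, rfl⟩
    · push Not at hyw
      rwa [mem_preimage, extend_apply_of_notMem hyw]
  · obtain ⟨U, V, hU, hV, hxU, hpV, hUV⟩ := t2_separation hxp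
    obtain ⟨n, hn⟩ := eventually_atTop.1 (tendsto_smallSets_iff.1 h.tendsto V (hV.mem_nhds hpV))
    refine hc.continuousAt.congr ?_
    filter_upwards [h.eventually_notMem_range hx n, hU.mem_nhds hxU] with y hy hyU
    refine (extend_apply_of_notMem fun k hyk => ?_).symm
    exact hUV.ne_of_mem hyU (hn k (not_lt.1 fun hkn => hy k hkn hyk) hyk) rfl

theorem push_apply (h : ConvergingCopies w p) (k : ℕ) (d : D) : push w (w k d) = w (k + 1) d :=
  h.extend_apply _ _ k d

theorem pull_apply (h : ConvergingCopies w p) (k : ℕ) (d : D) : pull w (w k d) = w (k - 1) d :=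
  h.extend_apply _ _ k d

theorem continuous_push [T2Space N] (h : ConvergingCopies w p) : Continuous (push w) :=
  h.continuous_extend (fun k => (h.isOpenEmbedding (k + 1)).continuous) continuous_id
    (h.tendsto.comp (tendsto_add_atTop_nat 1))

theorem continuous_pull [T2Space N] (h : ConvergingCopies w p) : Continuous (pull w) :=
  h.continuous_extend (fun k => (h.isOpenEmbedding (k - 1)).continuous) continuous_id
    (h.tendsto.comp (tendsto_sub_atTop_nat 1))

theorem leftInverse_pull_push (h : ConvergingCopies w p) :
    Function.LeftInverse (pull w) (push w) := by
  intro x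
  by_cases hx : ∃ k, x ∈ range (w k)
  · obtain ⟨k, d, rfl⟩ := hx
    rw [h.push_apply, h.pull_apply, Nat.add_sub_cancel]
  · push Not at hx
    rw [push_of_notMem hx, pull_of_notMem hx]

theorem push_notMem_range_zero (h : ConvergingCopies w p) (x : N) : push w x ∉ range (w 0) := by
  by_cases hx : ∃ k, x ∈ range (w k)
  · obtain ⟨k, d, rfl⟩ := hx
    rw [h.push_apply]
    exact disjoint_left.1 (h.disjoint_range k.succ_ne_zero) ⟨d, rfl⟩
  · push Not at hx
    rw [push_of_notMem hx]
    exact hx 0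

theorem push_pull (h : ConvergingCopies w p) {x : N} (hx : x ∉ range (w 0)) :
    push w (pull w x) = x := by
  by_cases hxw : ∃ k, x ∈ range (w k)
  · obtain ⟨k, d, rfl⟩ := hxw
    have hk : k ≠ 0 := by rintro rfl; exact hx ⟨d, rfl⟩
    rw [h.pull_apply, h.push_apply, Nat.sub_add_cancel (Nat.one_le_iff_ne_zero.2 hk)]
  · push Not at hxw
    rw [pull_of_notMem hxw, push_of_notMem hxw]

theorem push_mem_iff (h : ConvergingCopies w p) {S : Set N}
    (hS : ∀ k d, w (k + 1) d ∈ S ↔ w k d ∈ S) (x : N) : push w x ∈ S ↔ x ∈ S := by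
  by_cases hx : ∃ k, x ∈ range (w k)
  · obtain ⟨k, d, rfl⟩ := hx
    rw [h.push_apply, hS]
  · push Not at hx
    rw [push_of_notMem hx]

theorem range_push (h : ConvergingCopies w p) : range (push w) = (range (w 0))ᶜ :=
  Subset.antisymm (range_subset_iff.2 h.push_notMem_range_zero)
    fun _ hx => ⟨_, h.push_pull hx⟩

theorem isOpenEmbedding_push [T2Space N] (h : ConvergingCopies w p) : IsOpenEmbedding (push w) :=
  ⟨h.leftInverse_pull_push.isEmbedding h.continuous_pull h.continuous_push,
    h.range_push ▸ (h.isClosed_range 0).isOpen_compl⟩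

theorem nonempty_sum_homeomorph [T2Space N] (h : ConvergingCopies w p) : Nonempty (N ⊕ D ≃ₜ N) :=
  ⟨(sumHomeomorphUnionRange h.isOpenEmbedding_push (h.isOpenEmbedding 0)
    (h.range_push ▸ disjoint_compl_left)).trans
    ((Homeomorph.setCongr (h.range_push ▸ compl_union_self _)).trans (Homeomorph.Set.univ N))⟩

end ConvergingCopies

end ConvergingCopies

section HHomogeneous

theorem ZeroDimensional.exists_disjoint_open_tendsto {N : Type*} [TopologicalSpace N] [T1Space N]
    [FirstCountableTopology N] (hN : ZeroDimensional N) {p : N} (hp : ¬IsOpen ({p} : Set N)) :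
    ∃ R : ℕ → Set N, (∀ k, IsOpen (R k) ∧ (R k).Nonempty) ∧
      Pairwise (Function.onFun Disjoint R) ∧ Tendsto R atTop (𝓝 p).smallSets := by
  obtain ⟨B, -, hB, hBp⟩ := hN.exists_antitone_basis_nhds isClopen_univ (mem_univ p)
  have hmem (k : ℕ) : p ∈ B k := mem_of_mem_nhds (hBp.mem k)
  have hdiff (m : ℕ) : ∀ᶠ n in atTop, (B m \ B n).Nonempty := by
    obtain ⟨x, hx, hxp⟩ : ∃ x ∈ B m, x ≠ p := by
      by_contra! hBm
      exact hp (subset_antisymm hBm (singleton_subset_iff.2 (hmem m)) ▸ (hB m).isOpen)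
    obtain ⟨n, hn⟩ := hBp.mem_iff.1 (isOpen_compl_singleton.mem_nhds hxp.symm)
    exact eventually_atTop.2 ⟨n, fun j hj => ⟨x, hx, fun hxj => hn (hBp.antitone hj hxj) rfl⟩⟩
  obtain ⟨φ, -, hφ, hBφ⟩ := hBp.subbasis_with_rel hdiff
  refine ⟨fun k => (B ∘ φ) k \ (B ∘ φ) (k + 1),
    fun k => ⟨(hB _).isOpen.sdiff (hB _).isClosed, hφ k.lt_succ_self⟩, ?_, ?_⟩
  · refine (pairwise_disjoint_on _).2 fun m n hmn => disjoint_left.2 fun x hxm hxn => ?_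
    exact hxm.2 (hBφ.antitone hmn hxn.1)
  · exact tendsto_smallSets_iff.2 fun t ht => (hBφ.eventually_subset ht).mono
      fun _ hk => sdiff_subset.trans hk

theorem HHomogeneous.of_homeomorph {N M : Type*} [TopologicalSpace N] [TopologicalSpace M]
    (h : HHomogeneous N) (e : N ≃ₜ M) : HHomogeneous M := by
  intro C hC hCne
  obtain ⟨φ⟩ := h (e ⁻¹' C) (hC.preimage e.continuous) (hCne.preimage e.surjective)
  exact ⟨((e.sets rfl).symm.trans φ).trans e⟩

theorem HHomogeneous.nonempty_sum_self_homeomorph {N : Type*} [TopologicalSpace N]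
    (h : HHomogeneous N) {C : Set N} (hC : IsClopen C) (hne : C.Nonempty) (hne' : Cᶜ.Nonempty) :
    Nonempty (N ⊕ N ≃ₜ N) := by
  obtain ⟨φ⟩ := h C hC hne
  obtain ⟨ψ⟩ := h Cᶜ hC.compl hne'
  obtain ⟨e⟩ := nonempty_sum_compl_homeomorph hC
  exact ⟨(φ.symm.sumCongr ψ.symm).trans e⟩

/-- A clopen self-copy of the pair `(N, S)`: an embedding of `N` onto a clopen subset of itself
under which points of `S`, and only those, go to points of `S`. -/
structure IsClopenSelfCopy {N : Type*} [TopologicalSpace N] (S : Set N) (e : N → N) : Prop where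
  isOpenEmbedding : IsOpenEmbedding e
  isClosed_range : IsClosed (range e)
  mem_iff (x : N) : e x ∈ S ↔ x ∈ S

theorem IsClopenSelfCopy.isClosedEmbedding {N : Type*} [TopologicalSpace N] {S : Set N} {e : N → N}
    (he : IsClopenSelfCopy S e) : IsClosedEmbedding e :=
  ⟨he.isOpenEmbedding.isEmbedding, he.isClosed_range⟩

theorem hhomEmbedded_iff_forall_isOpen {N : Type*} [TopologicalSpace N] {S : Set N} :
    HHomEmbedded S ↔
      ∀ V : Set N, IsOpen V → V.Nonempty → ∃ e, IsClopenSelfCopy S e ∧ range e ⊆ V := by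
  refine ⟨fun ⟨ℬ, hℬ, hπ, hφ⟩ V hV hVne => ?_, fun h => ?_⟩
  · obtain ⟨U, hU, hUV⟩ := hπ V hV hVne
    obtain ⟨φ, hφU⟩ := hφ U hU
    have hrange : range (Subtype.val ∘ φ) = U := by
      rw [φ.surjective.range_comp, Subtype.range_coe]
    refine ⟨Subtype.val ∘ φ,
      ⟨(hℬ U hU).1.isOpen.isOpenEmbedding_subtypeVal.comp φ.isOpenEmbedding,
        hrange.symm ▸ (hℬ U hU).1.isClosed, fun x => ?_⟩, hrange.trans_subset hUV⟩
    rw [← image_comp] at hφU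
    rw [← (Subtype.val_injective.comp φ.injective).mem_set_image (a := x), hφU]
    exact ⟨fun hx => ⟨hx, (φ x).2⟩, And.left⟩
  · refine ⟨{U | U.Nonempty ∧ ∃ e, IsClopenSelfCopy S e ∧ range e = U},
      ?_, fun V hV hVne => ?_, ?_⟩
    · rintro _ ⟨hne, e, he, rfl⟩
      exact ⟨⟨he.isClosed_range, he.isOpenEmbedding.isOpen_range⟩, hne⟩
    · obtain ⟨e, he, heV⟩ := h V hV hVne
      exact ⟨range e, ⟨hVne.to_subtype.elim fun v => ⟨e v, ⟨_, rfl⟩⟩, e, he, rfl⟩, heV⟩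
    · rintro _ ⟨-, e, he, rfl⟩
      refine ⟨he.isOpenEmbedding.toHomeomorph, ?_⟩
      rw [← image_comp]
      ext x
      exact ⟨fun ⟨y, hy, hyx⟩ => hyx ▸ ⟨(he.mem_iff y).2 hy, y, rfl⟩,
        fun ⟨hx, y, hyx⟩ => ⟨y, (he.mem_iff y).1 (hyx ▸ hx), hyx⟩⟩

namespace HHomEmbedded

theorem image {N M : Type*} [TopologicalSpace N] [TopologicalSpace M] {S : Set N}
    (h : HHomEmbedded S) (φ : N ≃ₜ M) : HHomEmbedded (φ '' S) := by
  rw [hhomEmbedded_iff_forall_isOpen] at h ⊢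
  intro V hV hVne
  obtain ⟨e, he, heV⟩ := h _ (hV.preimage φ.continuous) (hVne.preimage φ.surjective)
  have hrange : range (φ ∘ e ∘ φ.symm) = φ '' range e := by
    rw [range_comp, φ.symm.surjective.range_comp]
  refine ⟨φ ∘ e ∘ φ.symm,
    ⟨φ.isOpenEmbedding.comp (he.isOpenEmbedding.comp φ.symm.isOpenEmbedding),
      hrange ▸ φ.isClosed_image.2 he.isClosed_range, fun x => ?_⟩,
    hrange ▸ image_subset_iff.2 heV⟩
  simp only [Function.comp_apply, φ.image_eq_preimage_symm, mem_preimage, φ.symm_apply_apply,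
    he.mem_iff]

theorem univ_subtype {N : Type*} [TopologicalSpace N] {S : Set N} (h : HHomEmbedded S) :
    HHomEmbedded (univ : Set S) := by
  rw [hhomEmbedded_iff_forall_isOpen] at h ⊢
  rintro _ ⟨V, hV, rfl⟩ ⟨s, hs⟩
  obtain ⟨e, he, heV⟩ := h V hV ⟨s, hs⟩
  have hmaps : MapsTo e S S := fun x => (he.mem_iff x).2
  have hrange : range (hmaps.restrict e S S) = Subtype.val ⁻¹' range e := by
    ext x
    refine ⟨fun ⟨y, hy⟩ => ⟨y, congrArg Subtype.val hy⟩, fun ⟨y, hy⟩ => ?_⟩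
    exact ⟨⟨y, (he.mem_iff y).1 (hy ▸ x.2)⟩, Subtype.ext hy⟩
  have hemb : IsEmbedding (hmaps.restrict e S S) :=
    .of_comp (he.isOpenEmbedding.continuous.restrict hmaps) continuous_subtype_val
      (he.isOpenEmbedding.isEmbedding.comp .subtypeVal)
  refine ⟨hmaps.restrict e S S, ⟨⟨hemb, ?_⟩, ?_, fun _ => Iff.rfl⟩, ?_⟩
  · exact hrange ▸ he.isOpenEmbedding.isOpen_range.preimage continuous_subtype_val
  · exact hrange ▸ he.isClosed_range.preimage continuous_subtype_val
  · exact hrange ▸ preimage_mono heV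

variable {N : Type*} [TopologicalSpace N] [T2Space N] [FirstCountableTopology N]

theorem nonempty_sum_homeomorph (h : HHomEmbedded (univ : Set N)) (hN : ZeroDimensional N) {p : N}
    (hp : ¬IsOpen ({p} : Set N)) {C : Set N} (hC : IsClopen C) : Nonempty (N ⊕ C ≃ₜ N) := by
  obtain ⟨R, hR, hdisj, htend⟩ := hN.exists_disjoint_open_tendsto hp
  choose e he heR using fun k => hhomEmbedded_iff_forall_isOpen.1 h (R k) (hR k).1 (hR k).2
  have hsub (k : ℕ) : range (fun c : C => e k c) ⊆ R k :=
    (range_comp_subset_range _ _).trans (heR k)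
  refine ConvergingCopies.nonempty_sum_homeomorph (w := fun k (c : C) => e k c) (p := p)
    ⟨fun k => (he k).isOpenEmbedding.comp hC.isOpen.isOpenEmbedding_subtypeVal, fun k => ?_,
      fun k l hkl => (hdisj hkl).mono (hsub k) (hsub l), ?_⟩
  · exact ((he k).isClosedEmbedding.comp
      hC.isClosed.isClosedEmbedding_subtypeVal).isClosed_range
  · exact tendsto_smallSets_iff.2 fun t ht =>
      (tendsto_smallSets_iff.1 htend t ht).mono fun k hk => (hsub k).trans hk

theorem hhomogeneous (h : HHomEmbedded (univ : Set N)) (hN : ZeroDimensional N) {p : N}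
    (hp : ¬IsOpen ({p} : Set N)) : HHomogeneous N := by
  intro C hC hCne
  obtain ⟨e, he, heC⟩ := hhomEmbedded_iff_forall_isOpen.1 h C hC.isOpen hCne
  have hdiff : IsClopen (C \ range e) :=
    hC.diff ⟨he.isClosed_range, he.isOpenEmbedding.isOpen_range⟩
  obtain ⟨absorb⟩ := h.nonempty_sum_homeomorph hN hp hdiff
  have split : N ⊕ (C \ range e : Set N) ≃ₜ C :=
    (sumHomeomorphUnionRange he.isOpenEmbedding hdiff.isOpen.isOpenEmbedding_subtypeVal
      (by simpa only [Subtype.range_coe] using disjoint_sdiff_right)).trans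
      (.setCongr (by simp only [Subtype.range_coe, union_sdiff_cancel heC]))
  exact ⟨split.symm.trans absorb⟩

end HHomEmbedded

end HHomogeneous

section Sequences

variable {Z : Type*}

/-- The sequence `z, f 0, f 1, …`. -/
def seqCons (z : Z) (f : ℕ → Z) : ℕ → Z
  | 0 => z
  | n + 1 => f n

/-- The sequence `f 1, f 2, …`. -/
def seqTail (f : ℕ → Z) : ℕ → Z := fun n => f (n + 1)

/-- The sequence `f` preceded by `k` entries `z`. -/
def pad (z : Z) (k : ℕ) (f : ℕ → Z) : ℕ → Z := fun i => if i < k then z else f (i - k)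

theorem seqCons_zero_seqTail (f : ℕ → Z) : seqCons (f 0) (seqTail f) = f := by
  ext (_ | n) <;> rfl

theorem seqCons_mem_pi_iff {A : Set Z} {z : Z} {f : ℕ → Z} :
    seqCons z f ∈ univ.pi (fun _ : ℕ => A) ↔ z ∈ A ∧ f ∈ univ.pi (fun _ : ℕ => A) := by
  simp only [mem_univ_pi]
  exact ⟨fun h => ⟨h 0, fun n => h (n + 1)⟩, fun h => Nat.rec h.1 fun n _ => h.2 n⟩

theorem pad_apply_add (z : Z) (k : ℕ) (f : ℕ → Z) (i : ℕ) : pad z k f (i + k) = f i := by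
  simp [pad]

theorem pad_mem_pi_iff {A : Set Z} {z : Z} (hz : z ∈ A) (k : ℕ) {f : ℕ → Z} :
    pad z k f ∈ univ.pi (fun _ : ℕ => A) ↔ f ∈ univ.pi (fun _ : ℕ => A) := by
  simp only [mem_univ_pi]
  refine ⟨fun h i => pad_apply_add z k f i ▸ h (i + k), fun h i => ?_⟩
  unfold pad
  split_ifs
  exacts [hz, h _]

theorem range_pad (z : Z) (R : Set Z) (k : ℕ) :
    range (fun f : {f : ℕ → Z | f 0 ∈ R} => pad z k f) =
      {f | (∀ i < k, f i = z) ∧ f k ∈ R} := by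
  ext f
  constructor
  · rintro ⟨⟨f, hf⟩, rfl⟩
    exact ⟨fun i hi => if_pos hi, by simpa [pad] using hf⟩
  · rintro ⟨hz, hR⟩
    refine ⟨⟨fun i => f (i + k), by simpa using hR⟩, funext fun i => ?_⟩
    by_cases hi : i < k
    · simp [pad, hi, hz i hi]
    · simp [pad, hi, Nat.sub_add_cancel (not_lt.1 hi)]

variable [TopologicalSpace Z]

/-- Prepending an entry identifies `Z × Z^ω` with `Z^ω`. -/
def seqConsHomeomorph (Z : Type*) [TopologicalSpace Z] : Z × (ℕ → Z) ≃ₜ (ℕ → Z) where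
  toFun p := seqCons p.1 p.2
  invFun f := (f 0, seqTail f)
  left_inv _ := rfl
  right_inv := seqCons_zero_seqTail
  continuous_toFun := continuous_pi fun
    | 0 => continuous_fst
    | n + 1 => (continuous_apply n).comp continuous_snd
  continuous_invFun :=
    (continuous_apply 0).prodMk (continuous_pi fun n => continuous_apply (n + 1))

/-- The homeomorphism `(Z^ω)^ω ≃ Z^ω` induced by the pairing function `Nat.pair`. -/
def flattenHomeomorph (Z : Type*) [TopologicalSpace Z] : (ℕ → ℕ → Z) ≃ₜ (ℕ → Z) where
  toFun g n := g n.unpair.1 n.unpair.2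
  invFun f i j := f (Nat.pair i j)
  left_inv g := by simp only [Nat.unpair_pair]
  right_inv f := by simp only [Nat.pair_unpair]
  continuous_toFun := by fun_prop
  continuous_invFun := by fun_prop

/-- The homeomorphism `X^ω × Y^ω ≃ (X × Y)^ω`. -/
def piProdHomeomorph (X Y : Type*) [TopologicalSpace X] [TopologicalSpace Y] :
    (ℕ → X) × (ℕ → Y) ≃ₜ (ℕ → X × Y) where
  toEquiv := (Equiv.arrowProdEquivProdArrow ℕ (fun _ => X) fun _ => Y).symm
  continuous_toFun := by simp only [Equiv.arrowProdEquivProdArrow]; fun_prop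
  continuous_invFun := by simp only [Equiv.arrowProdEquivProdArrow]; fun_prop

theorem flattenHomeomorph_mem_pi_iff {A : Set Z} {g : ℕ → ℕ → Z} :
    flattenHomeomorph Z g ∈ univ.pi (fun _ : ℕ => A) ↔ ∀ i, g i ∈ univ.pi (fun _ : ℕ => A) := by
  simp only [mem_univ_pi]
  exact ⟨fun h i j => by simpa [flattenHomeomorph] using h (Nat.pair i j), fun h n => h _ _⟩

theorem exists_cylinder_subset {f : ℕ → Z} {O : Set (ℕ → Z)} (hO : O ∈ 𝓝 f) :
    ∃ n, ∃ W : ℕ → Set Z, (∀ i, W i ∈ 𝓝 (f i)) ∧ {g | ∀ i < n, g i ∈ W i} ⊆ O := by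
  rw [nhds_pi, Filter.mem_pi] at hO
  obtain ⟨I, hI, W, hW, hWO⟩ := hO
  obtain ⟨n, hn⟩ := hI.bddAbove
  exact ⟨n + 1, W, hW, fun g hg => hWO fun i hi => hg i (Nat.lt_succ_of_le (hn hi))⟩

theorem not_isOpen_singleton_seq [Nontrivial Z] (f : ℕ → Z) : ¬IsOpen ({f} : Set (ℕ → Z)) := by
  intro h
  obtain ⟨n, W, hW, hWf⟩ := exists_cylinder_subset (h.mem_nhds rfl)
  obtain ⟨z, hz⟩ := exists_ne (f n)
  refine hz ?_
  have hupdate : Function.update f n z = f := hWf fun i hi => by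
    rw [Function.update_of_ne hi.ne]
    exact mem_of_mem_nhds (hW i)
  simpa using congrFun hupdate n

theorem isEmbedding_pad (z : Z) (k : ℕ) : IsEmbedding (pad z k) :=
  Function.LeftInverse.isEmbedding (f := fun g i => g (i + k))
    (fun f => funext (pad_apply_add z k f)) (continuous_pi fun i => continuous_apply (i + k))
    (continuous_pi fun i => by unfold pad; split_ifs <;> fun_prop)

theorem isClopen_range_pad {z : Z} (hz : IsClopen {z}) {R : Set Z} (hR : IsClopen R) (k : ℕ) :
    IsClopen (range fun f : {f : ℕ → Z | f 0 ∈ R} => pad z k f) := by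
  have hinter : {f : ℕ → Z | (∀ i < k, f i = z) ∧ f k ∈ R} =
      (⋂ i ∈ Iio k, (fun f => f i) ⁻¹' {z}) ∩ (fun f => f k) ⁻¹' R := by
    ext f
    simp only [mem_inter_iff, mem_iInter, mem_Iio, mem_preimage, mem_singleton_iff, mem_ofPred_eq]
  rw [range_pad, hinter]
  exact ((finite_Iio k).isClopen_biInter fun i _ => hz.preimage (continuous_apply i)).inter
    (hR.preimage (continuous_apply k))

theorem convergingCopies_pad {z : Z} (hz : IsClopen {z}) {R : Set Z} (hR : IsClopen R)
    (hzR : z ∉ R) :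
    ConvergingCopies (fun k (f : {f : ℕ → Z | f 0 ∈ R}) => pad z k f) fun _ => z where
  isOpenEmbedding k :=
    ⟨(isEmbedding_pad z k).comp .subtypeVal, (isClopen_range_pad hz hR k).isOpen⟩
  isClosed_range k := (isClopen_range_pad hz hR k).isClosed
  disjoint_range := by
    refine (pairwise_disjoint_on _).2 fun m n hmn => ?_
    simp only [range_pad]
    exact disjoint_left.2 fun f hm hn => hzR (hn.1 m hmn ▸ hm.2)
  tendsto := by
    refine tendsto_smallSets_iff.2 fun t ht => ?_
    obtain ⟨n, W, hW, hWt⟩ := exists_cylinder_subset ht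
    refine eventually_atTop.2 ⟨n, fun k hk => (range_pad z R k).trans_subset ?_⟩
    exact fun f hf => hWt fun i hi => hf.1 i (hi.trans_le hk) ▸ mem_of_mem_nhds (hW i)

end Sequences

section Shift

variable {Z : Type*}

/-- The push map of the copies of `{f | f 0 ∈ R}` obtained by prepending entries `z`; it vacates
`{f | f 0 ∈ R}`. -/
noncomputable def shift (z : Z) (R : Set Z) : (ℕ → Z) → ℕ → Z :=
  ConvergingCopies.push fun k (f : {f : ℕ → Z | f 0 ∈ R}) => pad z k f

/-- The left inverse of `shift`. -/
noncomputable def unshift (z : Z) (R : Set Z) : (ℕ → Z) → ℕ → Z :=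
  ConvergingCopies.pull fun k (f : {f : ℕ → Z | f 0 ∈ R}) => pad z k f

variable [TopologicalSpace Z] {z : Z} {R : Set Z}

theorem continuous_shift [T2Space Z] (hz : IsClopen {z}) (hR : IsClopen R) (hzR : z ∉ R) :
    Continuous (shift z R) :=
  (convergingCopies_pad hz hR hzR).continuous_push

theorem continuous_unshift [T2Space Z] (hz : IsClopen {z}) (hR : IsClopen R) (hzR : z ∉ R) :
    Continuous (unshift z R) :=
  (convergingCopies_pad hz hR hzR).continuous_pull

theorem unshift_shift (hz : IsClopen {z}) (hR : IsClopen R) (hzR : z ∉ R) (f : ℕ → Z) :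
    unshift z R (shift z R f) = f :=
  (convergingCopies_pad hz hR hzR).leftInverse_pull_push f

theorem shift_unshift (hz : IsClopen {z}) (hR : IsClopen R) (hzR : z ∉ R) {f : ℕ → Z}
    (hf : f 0 ∉ R) : shift z R (unshift z R f) = f :=
  (convergingCopies_pad hz hR hzR).push_pull fun h =>
    hf ((range_pad z R 0).subset h).2

theorem shift_zero_notMem (hz : IsClopen {z}) (hR : IsClopen R) (hzR : z ∉ R) (f : ℕ → Z) :
    shift z R f 0 ∉ R := fun h =>
  (convergingCopies_pad hz hR hzR).push_notMem_range_zero f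
    ((range_pad z R 0).superset ⟨fun _ hi => absurd hi (Nat.not_lt_zero _), h⟩)

theorem shift_mem_pi_iff (hz : IsClopen {z}) (hR : IsClopen R) (hzR : z ∉ R) {A : Set Z}
    (hzA : z ∈ A) (f : ℕ → Z) :
    shift z R f ∈ univ.pi (fun _ : ℕ => A) ↔ f ∈ univ.pi (fun _ : ℕ => A) :=
  (convergingCopies_pad hz hR hzR).push_mem_iff
    (fun k d => by rw [pad_mem_pi_iff hzA, pad_mem_pi_iff hzA]) f

end Shift

section Head

variable {Z : Type*} {B : ℕ → Set Z} {g : ℕ → ℕ → Z} {x y : Z} {n : ℕ}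

/-- The point `x ∈ B 0` is the head of the sequence of sequences `g`: if `x` lies in the ring
`B k \ B (k + 1)`, then `g k` is the first row of `g` whose `0`-th entry lies in the ring with the
same index, and that entry is `x`; if `x` lies in no ring, then `g` has no such row. -/
structure IsHead (B : ℕ → Set Z) (g : ℕ → ℕ → Z) (x : Z) : Prop where
  mem_zero : x ∈ B 0
  notMem_ring (j : ℕ) : x ∈ B (j + 1) → g j 0 ∉ B j \ B (j + 1)
  eq_of_mem_ring (j : ℕ) : x ∈ B j \ B (j + 1) → g j 0 = x

theorem notMem_ring_of_notMem_zero {z : Z} (hB : Antitone B) (hzB : z ∉ B 0) (j : ℕ) :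
    z ∉ B j \ B (j + 1) := fun h => hzB (hB j.zero_le h.1)

theorem mem_or_exists_mem_ring (hx : x ∈ B 0) (n : ℕ) :
    x ∈ B n ∨ ∃ k < n, x ∈ B k \ B (k + 1) := by
  induction n with
  | zero => exact .inl hx
  | succ n ih =>
    by_cases hn : x ∈ B (n + 1)
    · exact .inl hn
    · rcases ih with hxn | ⟨k, hk, hxk⟩
      · exact .inr ⟨n, n.lt_succ_self, hxn, hn⟩
      · exact .inr ⟨k, hk.trans n.lt_succ_self, hxk⟩

theorem IsHead.mem_iff (hB : Antitone B) (hx : IsHead B g x) :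
    x ∈ B n ↔ ∀ l < n, g l 0 ∉ B l \ B (l + 1) := by
  refine ⟨fun hxn l hl => hx.notMem_ring l (hB hl hxn), fun h => ?_⟩
  rcases mem_or_exists_mem_ring hx.mem_zero n with hxn | ⟨k, hk, hxk⟩
  · exact hxn
  · exact absurd (hx.eq_of_mem_ring k hxk ▸ hxk) (h k hk)

theorem IsHead.unique {b : Z} (hB : Antitone B) (hb : ⋂ k, B k = {b}) (hx : IsHead B g x)
    (hy : IsHead B g y) : x = y := by
  have hxy (n : ℕ) : x ∈ B n ↔ y ∈ B n := (hx.mem_iff hB).trans (hy.mem_iff hB).symm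
  by_cases hmem : ∀ n, x ∈ B n
  · have eq_limit {w : Z} (hw : ∀ n, w ∈ B n) : w = b := hb.subset (mem_iInter.2 hw)
    rw [eq_limit hmem, eq_limit fun n => (hxy n).1 (hmem n)]
  · push Not at hmem
    obtain ⟨n, hn⟩ := hmem
    obtain ⟨k, -, hk⟩ := (mem_or_exists_mem_ring hx.mem_zero n).resolve_left hn
    rw [← hx.eq_of_mem_ring k hk,
      hy.eq_of_mem_ring k ⟨(hxy k).1 hk.1, fun h => hk.2 ((hxy _).2 h)⟩]

theorem exists_isHead {b : Z} (hB : Antitone B) (hb : ⋂ k, B k = {b}) (g : ℕ → ℕ → Z) :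
    ∃ x, IsHead B g x := by
  classical
  by_cases hhit : ∃ k, g k 0 ∈ B k \ B (k + 1)
  · have hk := Nat.find_spec hhit
    set k := Nat.find hhit
    refine ⟨g k 0, hB k.zero_le hk.1, fun j hj hgj => ?_, fun j hj => ?_⟩
    · have hjk : j < k := not_le.1 fun hkj => hk.2 (hB (Nat.succ_le_succ hkj) hj)
      exact Nat.find_min hhit hjk hgj
    · obtain rfl : j = k := by
        refine le_antisymm (not_lt.1 fun h => hk.2 (hB h hj.1)) (not_lt.1 fun h => hj.2 (hB h hk.1))
      rfl
  · push Not at hhit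
    have hmem (k : ℕ) : b ∈ B k := mem_iInter.1 (hb.superset rfl) k
    exact ⟨b, hmem 0, fun j _ => hhit j, fun j hj => absurd (hmem _) hj.2⟩

open Classical in
/-- The point `x` of `B 0` is recorded in a sequence of sequences by applying `insertAt z B x j` to
the `j`-th row: if `x` lies in the `k`-th ring, then it is prepended to the `k`-th row, and the rows
above are shifted in order not to start in the ring with their index. -/
noncomputable def insertAt (z : Z) (B : ℕ → Set Z) (x : Z) (j : ℕ) (f : ℕ → Z) : ℕ → Z :=
  if x ∈ B (j + 1) then shift z (B j \ B (j + 1)) f else if x ∈ B j then seqCons x f else f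

open Classical in
/-- The left inverse of `insertAt z B x j`. -/
noncomputable def deleteAt (z : Z) (B : ℕ → Set Z) (x : Z) (j : ℕ) (f : ℕ → Z) : ℕ → Z :=
  if x ∈ B (j + 1) then unshift z (B j \ B (j + 1)) f else if x ∈ B j then seqTail f else f

variable [TopologicalSpace Z]

theorem iInter_eq_singleton_of_hasAntitoneBasis [T1Space Z] {b : Z}
    (hBb : (𝓝 b).HasAntitoneBasis B) : ⋂ k, B k = {b} := by
  rw [← ker_nhds, hBb.toHasBasis.ker]
  simp only [iInter_true]

theorem IsHead.isClopen_preimage {head : (ℕ → ℕ → Z) → Z} (hhead : ∀ g, IsHead B g (head g))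
    (hB : Antitone B) (hBc : ∀ k, IsClopen (B k)) (n : ℕ) : IsClopen (head ⁻¹' B n) := by
  have hinter : head ⁻¹' B n =
      ⋂ l ∈ Iio n, (fun g : ℕ → ℕ → Z => g l 0) ⁻¹' (B l \ B (l + 1))ᶜ := by
    ext g
    simp only [mem_preimage, (hhead g).mem_iff hB, mem_iInter, mem_Iio, mem_compl_iff]
  rw [hinter]
  exact (finite_Iio n).isClopen_biInter fun l _ =>
    ((hBc l).diff (hBc (l + 1))).compl.preimage (by fun_prop)

theorem IsHead.continuous_of_forall [T1Space Z] {b : Z} {head : (ℕ → ℕ → Z) → Z}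
    (hhead : ∀ g, IsHead B g (head g)) (hBc : ∀ k, IsClopen (B k))
    (hBb : (𝓝 b).HasAntitoneBasis B) : Continuous head := by
  have hclopen := isClopen_preimage hhead hBb.antitone hBc
  refine continuous_iff_continuousAt.2 fun g => ?_
  by_cases hmem : ∀ n, head g ∈ B n
  · have hgb : head g = b :=
      (iInter_eq_singleton_of_hasAntitoneBasis hBb).subset (mem_iInter.2 hmem)
    rw [ContinuousAt, hgb, hBb.tendsto_right_iff]
    exact fun n _ => (hclopen n).isOpen.mem_nhds (hmem n)
  · push Not at hmem
    obtain ⟨n, hn⟩ := hmem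
    obtain ⟨k, -, hk⟩ := (mem_or_exists_mem_ring (hhead g).mem_zero n).resolve_left hn
    have heq : head =ᶠ[𝓝 g] fun g' => g' k 0 := by
      filter_upwards [((hclopen k).diff (hclopen (k + 1))).isOpen.mem_nhds hk] with g' hg'
      exact ((hhead g').eq_of_mem_ring k hg').symm
    exact ((continuous_apply 0).comp (continuous_apply k)).continuousAt.congr heq.symm

variable {z : Z} {j : ℕ}

theorem continuous_insertAt [T2Space Z] (hz : IsClopen {z}) (hBc : ∀ k, IsClopen (B k))
    (hB : Antitone B) (hzB : z ∉ B 0) (j : ℕ) :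
    Continuous fun p : Z × (ℕ → Z) => insertAt z B p.1 j p.2 := by
  classical
  unfold insertAt
  refine continuous_ite_of_isClopen ((hBc _).preimage continuous_fst) ?_
    (continuous_ite_of_isClopen ((hBc _).preimage continuous_fst)
      (seqConsHomeomorph Z).continuous continuous_snd)
  exact (continuous_shift hz ((hBc j).diff (hBc _)) (notMem_ring_of_notMem_zero hB hzB j)).comp
    continuous_snd

theorem continuous_deleteAt [T2Space Z] (hz : IsClopen {z}) (hBc : ∀ k, IsClopen (B k))
    (hB : Antitone B) (hzB : z ∉ B 0) (j : ℕ) :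
    Continuous fun p : Z × (ℕ → Z) => deleteAt z B p.1 j p.2 := by
  classical
  unfold deleteAt
  refine continuous_ite_of_isClopen ((hBc _).preimage continuous_fst) ?_
    (continuous_ite_of_isClopen ((hBc _).preimage continuous_fst)
      ((continuous_snd.comp (seqConsHomeomorph Z).symm.continuous).comp continuous_snd)
      continuous_snd)
  exact (continuous_unshift hz ((hBc j).diff (hBc _)) (notMem_ring_of_notMem_zero hB hzB j)).comp
    continuous_snd

theorem deleteAt_insertAt (hz : IsClopen {z}) (hBc : ∀ k, IsClopen (B k)) (hB : Antitone B)
    (hzB : z ∉ B 0) (x : Z) (j : ℕ) (f : ℕ → Z) : deleteAt z B x j (insertAt z B x j f) = f := by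
  unfold deleteAt insertAt
  split_ifs
  exacts [unshift_shift hz ((hBc j).diff (hBc _)) (notMem_ring_of_notMem_zero hB hzB j) f, rfl, rfl]

theorem insertAt_deleteAt (hz : IsClopen {z}) (hBc : ∀ k, IsClopen (B k)) (hB : Antitone B)
    (hzB : z ∉ B 0) (hx : IsHead B g x) (j : ℕ) :
    insertAt z B x j (deleteAt z B x j (g j)) = g j := by
  unfold deleteAt insertAt
  split_ifs with hxj hxj'
  · exact shift_unshift hz ((hBc j).diff (hBc _)) (notMem_ring_of_notMem_zero hB hzB j)
      (hx.notMem_ring j hxj)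
  · exact hx.eq_of_mem_ring j ⟨hxj', hxj⟩ ▸ seqCons_zero_seqTail (g j)
  · rfl

theorem isHead_insertAt (hz : IsClopen {z}) (hBc : ∀ k, IsClopen (B k)) (hB : Antitone B)
    (hzB : z ∉ B 0) (hx : x ∈ B 0) (q : ℕ → ℕ → Z) :
    IsHead B (fun j => insertAt z B x j (q j)) x where
  mem_zero := hx
  notMem_ring j hxj := by
    rw [insertAt, if_pos hxj]
    exact shift_zero_notMem hz ((hBc j).diff (hBc _)) (notMem_ring_of_notMem_zero hB hzB j) (q j)
  eq_of_mem_ring j hxj := by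
    rw [insertAt, if_neg hxj.2, if_pos hxj.1]
    rfl

theorem insertAt_mem_pi_iff (hz : IsClopen {z}) (hBc : ∀ k, IsClopen (B k)) (hB : Antitone B)
    (hzB : z ∉ B 0) {A : Set Z} (hzA : z ∈ A) (f : ℕ → Z) :
    insertAt z B x j f ∈ univ.pi (fun _ : ℕ => A) ↔
      (x ∈ B j \ B (j + 1) → x ∈ A) ∧ f ∈ univ.pi (fun _ : ℕ => A) := by
  unfold insertAt
  split_ifs with hxj hxj'
  · simp [shift_mem_pi_iff hz ((hBc j).diff (hBc _)) (notMem_ring_of_notMem_zero hB hzB j) hzA, hxj]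
  · rw [seqCons_mem_pi_iff]
    simp [hxj, hxj']
  · simp [hxj']

theorem forall_insertAt_mem_pi_iff [T1Space Z] (hz : IsClopen {z}) {b : Z}
    (hBc : ∀ k, IsClopen (B k)) (hBb : (𝓝 b).HasAntitoneBasis B) (hzB : z ∉ B 0) {A : Set Z}
    (hzA : z ∈ A) (hbA : b ∈ A) (hx : x ∈ B 0) (q : ℕ → ℕ → Z) :
    (∀ j, insertAt z B x j (q j) ∈ univ.pi fun _ : ℕ => A) ↔
      x ∈ A ∧ ∀ j, q j ∈ univ.pi fun _ : ℕ => A := by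
  simp only [insertAt_mem_pi_iff hz hBc hBb.antitone hzB hzA, forall_and]
  refine and_congr_left fun _ => ⟨fun h => ?_, fun hxA _ _ => hxA⟩
  by_contra hxA
  have hxB (n : ℕ) : x ∈ B n :=
    (mem_or_exists_mem_ring hx n).resolve_right fun ⟨k, _, hk⟩ => hxA (h k hk)
  exact hxA ((iInter_eq_singleton_of_hasAntitoneBasis hBb).subset (mem_iInter.2 hxB) ▸ hbA)

/-- The factor `V` is absorbed by the pair `(Z^ω, A^ω)`: the pairs `(V × Z^ω, (V ∩ A) × A^ω)` and
`(Z^ω, A^ω)` are homeomorphic. -/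
def IsAbsorbed (A V : Set Z) : Prop :=
  ∃ h : V × (ℕ → Z) ≃ₜ (ℕ → Z), ∀ p,
    h p ∈ univ.pi (fun _ : ℕ => A) ↔ (p.1 : Z) ∈ A ∧ p.2 ∈ univ.pi (fun _ : ℕ => A)

theorem isAbsorbed_singleton {A : Set Z} (hzA : z ∈ A) : IsAbsorbed A {z} :=
  ⟨.uniqueProd _ _, fun ⟨⟨_, rfl⟩, _⟩ => ⟨fun h => ⟨hzA, h⟩, And.right⟩⟩

theorem isAbsorbed_of_hasAntitoneBasis [T2Space Z] (hz : IsClopen {z}) {b : Z}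
    (hBc : ∀ k, IsClopen (B k)) (hBb : (𝓝 b).HasAntitoneBasis B) (hzB : z ∉ B 0) {A : Set Z}
    (hzA : z ∈ A) (hbA : b ∈ A) : IsAbsorbed A (B 0) := by
  have hB := hBb.antitone
  have hb := iInter_eq_singleton_of_hasAntitoneBasis hBb
  choose head hhead using exists_isHead hB hb
  have hhead_insertAt (p : B 0 × (ℕ → ℕ → Z)) :
      head (fun j => insertAt z B p.1 j (p.2 j)) = p.1 :=
    (hhead _).unique hB hb (isHead_insertAt hz hBc hB hzB p.1.2 p.2)
  have hcont : Continuous head := IsHead.continuous_of_forall hhead hBc hBb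
  let h : B 0 × (ℕ → ℕ → Z) ≃ₜ (ℕ → ℕ → Z) :=
    { toFun p := fun j => insertAt z B p.1 j (p.2 j)
      invFun g := (⟨head g, (hhead g).mem_zero⟩, fun j => deleteAt z B (head g) j (g j))
      left_inv p := Prod.ext (Subtype.ext (hhead_insertAt p)) <| funext fun j => by
        simp only [hhead_insertAt, deleteAt_insertAt hz hBc hB hzB]
      right_inv g := funext fun j => insertAt_deleteAt hz hBc hB hzB (hhead g) j
      continuous_toFun := continuous_pi fun j => (continuous_insertAt hz hBc hB hzB j).comp <|
        (continuous_subtype_val.comp continuous_fst).prodMk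
          ((continuous_apply j).comp continuous_snd)
      continuous_invFun := (hcont.subtype_mk _).prodMk <| continuous_pi fun j =>
        (continuous_deleteAt hz hBc hB hzB j).comp (hcont.prodMk (continuous_apply j)) }
  refine ⟨((Homeomorph.refl _).prodCongr (flattenHomeomorph Z).symm).trans
    (h.trans (flattenHomeomorph Z)), fun ⟨x, f⟩ => flattenHomeomorph_mem_pi_iff.trans <|
      (forall_insertAt_mem_pi_iff hz hBc hBb hzB hzA hbA x.2 _).trans <|
        and_congr_right fun _ => ?_⟩
  rw [← flattenHomeomorph_mem_pi_iff]
  exact iff_of_eq (congrArg (· ∈ _) ((flattenHomeomorph Z).apply_symm_apply f))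

end Head

section Cylinders

variable {Z : Type*} [TopologicalSpace Z] {A : Set Z}

theorem IsAbsorbed.exists_isClopenSelfCopy {V : Set Z} (hVA : IsAbsorbed A V) (hV : IsClopen V)
    {e : (ℕ → Z) → ℕ → Z} (he : IsClopenSelfCopy (univ.pi fun _ => A) e) :
    ∃ e', IsClopenSelfCopy (univ.pi fun _ : ℕ => A) e' ∧
      range e' ⊆ {f | f 0 ∈ V ∧ seqTail f ∈ range e} := by
  obtain ⟨h, hA⟩ := hVA
  refine ⟨fun f => seqCons (h.symm f).1 (e (h.symm f).2), ⟨?_, ?_, fun f => ?_⟩, ?_⟩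
  · exact (seqConsHomeomorph Z).isOpenEmbedding.comp
      ((hV.isOpen.isOpenEmbedding_subtypeVal.prodMap he.isOpenEmbedding).comp
        h.symm.isOpenEmbedding)
  · exact ((seqConsHomeomorph Z).isClosedEmbedding.comp
      ((hV.isClosed.isClosedEmbedding_subtypeVal.prodMap he.isClosedEmbedding).comp
        h.symm.isClosedEmbedding)).isClosed_range
  · rw [seqCons_mem_pi_iff, he.mem_iff, ← hA, h.apply_symm_apply]
  · rintro _ ⟨f, rfl⟩
    exact ⟨(h.symm f).1.2, _, rfl⟩

theorem exists_isClopenSelfCopy_cylinder (n : ℕ) {V : ℕ → Set Z} (hV : ∀ i, IsClopen (V i))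
    (hVA : ∀ i, IsAbsorbed A (V i)) :
    ∃ e, IsClopenSelfCopy (univ.pi fun _ : ℕ => A) e ∧ range e ⊆ {f | ∀ i < n, f i ∈ V i} := by
  induction n generalizing V with
  | zero =>
    exact ⟨id, ⟨.id, by simp only [range_id, isClosed_univ], fun _ => Iff.rfl⟩,
      fun f _ i hi => absurd hi i.not_lt_zero⟩
  | succ n ih =>
    obtain ⟨e, he, hen⟩ := ih (fun i => hV (i + 1)) (fun i => hVA (i + 1))
    obtain ⟨e', he', hrange⟩ := (hVA 0).exists_isClopenSelfCopy (hV 0) he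
    refine ⟨e', he', fun f hf i hi => ?_⟩
    cases i with
    | zero => exact (hrange hf).1
    | succ i => exact hen (hrange hf).2 i (Nat.lt_of_succ_lt_succ hi)

variable [T2Space Z] [FirstCountableTopology Z]

theorem ZeroDimensional.exists_isAbsorbed_subset (hZ : ZeroDimensional Z) (hA : Dense A) {z : Z}
    (hz : IsOpen {z}) (hzA : z ∈ A) {y : Z} {W : Set Z} (hW : W ∈ 𝓝 y) :
    ∃ V, IsClopen V ∧ IsAbsorbed A V ∧ V ⊆ W := by
  have hzc : IsClopen {z} := ⟨isClosed_singleton, hz⟩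
  by_cases hzW : z ∈ W
  · exact ⟨{z}, hzc, isAbsorbed_singleton hzA, singleton_subset_iff.2 hzW⟩
  · obtain ⟨V, hV, hyV, hVW⟩ := hZ y _ isOpen_interior (mem_interior_iff_mem_nhds.2 hW)
    replace hVW : V ⊆ W := hVW.trans interior_subset
    obtain ⟨b, hbV, hbA⟩ := hA.inter_open_nonempty V hV.isOpen ⟨y, hyV⟩
    obtain ⟨B, rfl, hBc, hBb⟩ := hZ.exists_antitone_basis_nhds hV hbV
    exact ⟨B 0, hV, isAbsorbed_of_hasAntitoneBasis hzc hBc hBb (fun h => hzW (hVW h)) hzA hbA, hVW⟩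

theorem ZeroDimensional.hhomEmbedded_pi (hZ : ZeroDimensional Z) (hA : Dense A) {z : Z}
    (hz : IsOpen {z}) (hzA : z ∈ A) : HHomEmbedded (univ.pi fun _ : ℕ => A) := by
  refine hhomEmbedded_iff_forall_isOpen.2 fun O hO ⟨f, hf⟩ => ?_
  obtain ⟨n, W, hW, hWO⟩ := exists_cylinder_subset (hO.mem_nhds hf)
  choose V hV hVA hVW using fun i => hZ.exists_isAbsorbed_subset hA hz hzA (hW i)
  obtain ⟨e, he, hen⟩ := exists_isClopenSelfCopy_cylinder n hV hVA
  exact ⟨e, he, hen.trans fun g hg => hWO fun i hi => hVW i (hg i hi)⟩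

theorem ZeroDimensional.hhomogeneous_seq [Nontrivial Z] (hZ : ZeroDimensional Z) {z : Z}
    (hz : IsOpen {z}) : HHomogeneous (ℕ → Z) := by
  have h := hZ.hhomEmbedded_pi dense_univ hz (mem_univ z)
  rw [pi_univ] at h
  exact h.hhomogeneous (.pi fun _ => hZ) (not_isOpen_singleton_seq fun _ => z)

end Cylinders

section IsolatedPoint

variable {N X : Type*} [TopologicalSpace N] [TopologicalSpace X]

theorem isOpen_singleton_inl : IsOpen {(Sum.inl () : Unit ⊕ N)} :=
  image_singleton ▸ isOpenMap_inl {()} (isOpen_discrete _)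

theorem ZeroDimensional.unit_sum (hN : ZeroDimensional N) : ZeroDimensional (Unit ⊕ N) :=
  .sum (.of_discreteTopology) hN

theorem ZeroDimensional.nonempty_prod_seq_unit_sum_homeomorph [Nonempty N] [T2Space N]
    [FirstCountableTopology N] (hN : ZeroDimensional N) :
    Nonempty (N × (ℕ → Unit ⊕ N) ≃ₜ (ℕ → Unit ⊕ N)) := by
  obtain ⟨b⟩ := ‹Nonempty N›
  obtain ⟨B, hB, hBc, hBb⟩ := hN.exists_antitone_basis_nhds isClopen_univ (mem_univ b)
  have hBc' (k : ℕ) : IsClopen (Sum.inr '' B k : Set (Unit ⊕ N)) :=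
    ⟨isClosedMap_inr _ (hBc k).isClosed, isOpenMap_inr _ (hBc k).isOpen⟩
  have hBb' : (𝓝 (Sum.inr b : Unit ⊕ N)).HasAntitoneBasis fun k => Sum.inr '' B k :=
    nhds_inr (X := Unit) b ▸ hBb.map Sum.inr
  have hinl : (Sum.inl () : Unit ⊕ N) ∉ Sum.inr '' B 0 := by simp
  obtain ⟨h, -⟩ := isAbsorbed_of_hasAntitoneBasis ⟨isClosed_singleton, isOpen_singleton_inl⟩
    hBc' hBb' hinl (mem_univ _) (mem_univ _)
  rw [hB, image_univ] at h
  exact ⟨(IsEmbedding.inr.toHomeomorph.prodCongr (.refl _)).trans h⟩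

theorem HHomogeneous.nonempty_seq_sum_self_homeomorph [Nontrivial X] [T1Space X]
    (h : HHomogeneous (ℕ → X)) (hX : ZeroDimensional X) :
    Nonempty ((ℕ → X) ⊕ (ℕ → X) ≃ₜ (ℕ → X)) := by
  obtain ⟨f, g, hfg⟩ := exists_pair_ne (ℕ → X)
  obtain ⟨C, hC, hfC, hCg⟩ := ZeroDimensional.pi (fun _ => hX) f {g}ᶜ isOpen_compl_singleton hfg
  exact h.nonempty_sum_self_homeomorph hC ⟨f, hfC⟩ ⟨g, fun hg => hCg hg rfl⟩

theorem HHomogeneous.nonempty_seq_unit_sum_homeomorph [Nontrivial X] [T2Space X]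
    [FirstCountableTopology X] (h : HHomogeneous (ℕ → X)) (hX : ZeroDimensional X) :
    Nonempty ((ℕ → Unit ⊕ (ℕ → X)) ≃ₜ (ℕ → X)) := by
  let N := ℕ → X
  let P := ℕ → Unit ⊕ N
  obtain ⟨double⟩ := h.nonempty_seq_sum_self_homeomorph hX
  obtain ⟨absorb⟩ := (ZeroDimensional.pi fun _ : ℕ => hX).nonempty_prod_seq_unit_sum_homeomorph
  let flatten : (ℕ → N) ≃ₜ N := flattenHomeomorph X
  let square : N × N ≃ₜ N :=
    ((Homeomorph.refl N).prodCongr flatten.symm).trans ((seqConsHomeomorph N).trans flatten)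
  let merge : N × (Unit ⊕ N) ≃ₜ N :=
    Homeomorph.prodSumDistrib.trans (((Homeomorph.prodUnique N Unit).sumCongr square).trans double)
  let interleave : N × P ≃ₜ (ℕ → N × (Unit ⊕ N)) :=
    (flatten.symm.prodCongr (.refl P)).trans (piProdHomeomorph N (Unit ⊕ N))
  exact ⟨absorb.symm.trans <| interleave.trans <|
    (Homeomorph.piCongrRight fun _ => merge).trans flatten⟩

end IsolatedPoint

section CantorScheme

variable {N : Type*}

/-- The `n`-th cell around `x`: starting from the whole space, the current cell `A` is intersected
at the `n`-th step with whichever of `G A n` and its complement contains `x`. -/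
def cell (G : Set N → ℕ → Set N) (x : N) : ℕ → Set N
  | 0 => univ
  | n + 1 => {y ∈ cell G x n | y ∈ G (cell G x n) n ↔ x ∈ G (cell G x n) n}

open Classical in
/-- The itinerary of `x` records on which side of `G A n`, where `A` is the `n`-th cell around `x`,
the point `x` lies. -/
noncomputable def itinerary (G : Set N → ℕ → Set N) (x : N) (n : ℕ) : Bool :=
  decide (x ∈ G (cell G x n) n)

variable {G : Set N → ℕ → Set N} {D : ℕ → Set N} {x y : N} {n : ℕ}

theorem mem_cell_self (G : Set N → ℕ → Set N) (x : N) (n : ℕ) : x ∈ cell G x n := by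
  induction n with
  | zero => trivial
  | succ n ih => exact ⟨ih, Iff.rfl⟩

theorem cell_eq_of_mem (hy : y ∈ cell G x n) : cell G y n = cell G x n := by
  induction n with
  | zero => rfl
  | succ n ih => simp only [cell, ih hy.1, hy.2]

theorem mem_cell_iff_itinerary_mem_cylinder :
    y ∈ cell G x n ↔ itinerary G y ∈ PiNat.cylinder (itinerary G x) n := by
  simp only [PiNat.mem_cylinder_iff]
  induction n with
  | zero => simp [cell]
  | succ n ih =>
    rw [Nat.forall_lt_succ_right, ← ih]
    refine and_congr_right fun hy => ?_
    rw [itinerary, itinerary, cell_eq_of_mem hy, decide_eq_decide]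

theorem isClopen_cell [TopologicalSpace N] (hG : ∀ A n, IsClopen (G A n)) (x : N) (n : ℕ) :
    IsClopen (cell G x n) := by
  induction n with
  | zero => exact isClopen_univ
  | succ n ih =>
    by_cases hx : x ∈ G (cell G x n) n
    · have hcell : cell G x (n + 1) = cell G x n ∩ G (cell G x n) n := by
        ext y
        simp [cell, hx]
      exact hcell ▸ ih.inter (hG _ _)
    · have hcell : cell G x (n + 1) = cell G x n \ G (cell G x n) n := by
        ext y
        simp [cell, hx]
      exact hcell ▸ ih.diff (hG _ _)

theorem hasBasis_nhds_cell [TopologicalSpace N] (hG : ∀ A n, IsClopen (G A n))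
    (hD : IsTopologicalBasis (range D))
    (hGD : ∀ A n, ∀ x ∈ A, ∀ y ∈ A, (y ∈ G A n ↔ x ∈ G A n) → x ∈ D n → y ∈ D n) (x : N) :
    (𝓝 x).HasBasis (fun _ : ℕ => True) (cell G x) := by
  refine ⟨fun U => ⟨fun hU => ?_, fun ⟨n, _, hn⟩ =>
    mem_of_superset ((isClopen_cell hG x n).isOpen.mem_nhds (mem_cell_self G x n)) hn⟩⟩
  obtain ⟨_, ⟨n, rfl⟩, hxn, hnU⟩ := hD.mem_nhds_iff.1 hU
  exact ⟨n + 1, trivial, fun y hy =>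
    hnU (hGD _ n x (mem_cell_self G x n) y hy.1 hy.2 hxn)⟩

theorem hasBasis_nhds_cylinder {E : Type*} [TopologicalSpace E] [DiscreteTopology E] (f : ℕ → E) :
    (𝓝 f).HasBasis (fun _ : ℕ => True) (PiNat.cylinder f) := by
  refine ⟨fun U => ⟨fun hU => ?_, fun ⟨n, _, hn⟩ =>
    mem_of_superset ((PiNat.isOpen_cylinder _ f n).mem_nhds (PiNat.self_mem_cylinder f n)) hn⟩⟩
  obtain ⟨_, ⟨g, n, rfl⟩, hfg, hgU⟩ :=
    (PiNat.isTopologicalBasis_cylinders fun _ : ℕ => E).mem_nhds_iff.1 hU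
  exact ⟨n, trivial, (PiNat.mem_cylinder_iff_eq.1 hfg).trans_subset hgU⟩

theorem isInducing_itinerary [TopologicalSpace N] (hG : ∀ A n, IsClopen (G A n))
    (hD : IsTopologicalBasis (range D))
    (hGD : ∀ A n, ∀ x ∈ A, ∀ y ∈ A, (y ∈ G A n ↔ x ∈ G A n) → x ∈ D n → y ∈ D n) :
    IsInducing (itinerary G) := by
  refine isInducing_iff_nhds.2 fun x => (hasBasis_nhds_cell hG hD hGD x).eq_of_same_basis ?_
  have hpre : (fun n => itinerary G ⁻¹' PiNat.cylinder (itinerary G x) n) = cell G x :=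
    funext fun n => ext fun y => mem_cell_iff_itinerary_mem_cylinder.symm
  exact hpre ▸ (hasBasis_nhds_cylinder (itinerary G x)).comap (itinerary G)

theorem exists_itinerary_mem_cylinder [Nonempty N]
    (hsplit : ∀ x n, (cell G x n ∩ G (cell G x n) n).Nonempty ∧
      (cell G x n \ G (cell G x n) n).Nonempty) (z : ℕ → Bool) (n : ℕ) :
    ∃ y, itinerary G y ∈ PiNat.cylinder z n := by
  induction n with
  | zero => exact ‹Nonempty N›.elim fun y => ⟨y, by simp⟩
  | succ n ih =>
    obtain ⟨x, hx⟩ := ih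
    obtain ⟨y, hy, hyz⟩ : ∃ y ∈ cell G x n, (y ∈ G (cell G x n) n ↔ z n = true) := by
      obtain ⟨⟨a, ha, haG⟩, b, hb, hbG⟩ := hsplit x n
      cases z n
      exacts [⟨b, hb, by simp [hbG]⟩, ⟨a, ha, by simp [haG]⟩]
    refine ⟨y, PiNat.mem_cylinder_iff.2 <| Nat.forall_lt_succ_right.2 ⟨fun i hi => ?_, ?_⟩⟩
    · exact (mem_cell_iff_itinerary_mem_cylinder.1 hy i hi).trans (hx i hi)
    · simp [itinerary, cell_eq_of_mem hy, hyz]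

variable [TopologicalSpace N]

theorem ZeroDimensional.exists_isTopologicalBasis_range [SecondCountableTopology N] [Nonempty N]
    (hN : ZeroDimensional N) :
    ∃ D : ℕ → Set N, (∀ k, IsClopen (D k)) ∧ IsTopologicalBasis (range D) := by
  have hbasis : IsTopologicalBasis {C : Set N | IsClopen C} :=
    isTopologicalBasis_of_isOpen_of_nhds (fun C hC => hC.isOpen) fun x U hx hU => hN x U hU hx
  obtain ⟨s, hs, hsc, hsb⟩ := hbasis.exists_countable
  obtain ⟨C, hC, -⟩ := nonempty_sUnion.1 (hsb.sUnion_eq ▸ univ_nonempty)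
  obtain ⟨D, rfl⟩ := hsc.exists_eq_range ⟨C, hC⟩
  exact ⟨D, fun k => hs (mem_range_self k), hsb⟩

theorem ZeroDimensional.exists_isClopen_split [T1Space N] (hN : ZeroDimensional N) {D : Set N}
    (hD : IsClopen D) (A : Set N) :
    ∃ G, IsClopen G ∧ (A.Nontrivial → (A ∩ G).Nonempty ∧ (A \ G).Nonempty) ∧
      ∀ x ∈ A, ∀ y ∈ A, (y ∈ G ↔ x ∈ G) → x ∈ D → y ∈ D := by
  by_cases hAD : A ⊆ D ∨ Disjoint A D
  · have hA : ∀ x ∈ A, ∀ y ∈ A, x ∈ D → y ∈ D := fun x hx y hy hxD =>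
      hAD.elim (fun h => h hy) fun h => absurd hxD (h.notMem_of_mem_left hx)
    by_cases hnt : A.Nontrivial
    · obtain ⟨x, hx, y, hy, hxy⟩ := hnt
      obtain ⟨C, hC, hxC, hCy⟩ := hN x {y}ᶜ isOpen_compl_singleton hxy
      exact ⟨C, hC, fun _ => ⟨⟨x, hx, hxC⟩, y, hy, fun hyC => hCy hyC rfl⟩,
        fun x hx y hy _ => hA x hx y hy⟩
    · exact ⟨∅, isClopen_empty, fun h => absurd h hnt, fun x hx y hy _ => hA x hx y hy⟩
  · rw [not_or, ← sdiff_nonempty, not_disjoint_iff_nonempty_inter] at hAD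
    exact ⟨D, hD, fun _ => hAD.symm, fun x _ y _ hxy hx => hxy.2 hx⟩

theorem ZeroDimensional.exists_isEmbedding_denseRange [SecondCountableTopology N] [T1Space N]
    [Nonempty N] (hN : ZeroDimensional N) (hni : ∀ x : N, ¬IsOpen {x}) :
    ∃ ι : N → ℕ → Bool, IsEmbedding ι ∧ DenseRange ι := by
  obtain ⟨D, hD, hDb⟩ := hN.exists_isTopologicalBasis_range
  choose G hG hsplit hGD using fun A n => hN.exists_isClopen_split (hD n) A
  have hnontrivial (x : N) (n : ℕ) : (cell G x n).Nontrivial :=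
    not_subsingleton_iff.1 fun hs => hni x <|
      hs.eq_singleton_of_mem (mem_cell_self G x n) ▸ (isClopen_cell hG x n).isOpen
  refine ⟨itinerary G, (isInducing_itinerary hG hDb hGD).isEmbedding, fun z => ?_⟩
  rw [mem_closure_iff_nhds_basis (hasBasis_nhds_cylinder z)]
  intro n _
  obtain ⟨y, hy⟩ := exists_itinerary_mem_cylinder (fun x n => hsplit _ n (hnontrivial x n)) z n
  exact ⟨_, mem_range_self y, hy⟩

end CantorScheme

section Equivalence

theorem isEmbedding_sumMap {X X' Y Y' : Type*} [TopologicalSpace X] [TopologicalSpace X']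
    [TopologicalSpace Y] [TopologicalSpace Y'] {f : X → X'} {g : Y → Y'} (hf : IsEmbedding f)
    (hg : IsEmbedding g) : IsEmbedding (Sum.map f g) := by
  refine IsEmbedding.sumElim_of_separatedNhds (.comp .inl hf) (.comp .inr hg) ?_
  exact ⟨range Sum.inl, range Sum.inr, isOpen_range_inl, isOpen_range_inr,
    range_comp_subset_range _ _, range_comp_subset_range _ _,
    isCompl_range_inl_range_inr.disjoint⟩

theorem denseRange_sumMap {X X' Y Y' : Type*} [TopologicalSpace X'] [TopologicalSpace Y']
    {f : X → X'} {g : Y → Y'} (hf : DenseRange f) (hg : DenseRange g) :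
    DenseRange (Sum.map f g) := by
  rintro (x | y)
  · refine closure_mono ?_ (image_closure_subset_closure_image continuous_inl ⟨x, hf x, rfl⟩)
    rintro _ ⟨_, ⟨a, rfl⟩, rfl⟩
    exact ⟨Sum.inl a, rfl⟩
  · refine closure_mono ?_ (image_closure_subset_closure_image continuous_inr ⟨y, hg y, rfl⟩)
    rintro _ ⟨_, ⟨b, rfl⟩, rfl⟩
    exact ⟨Sum.inr b, rfl⟩

variable {X : Type*} [TopologicalSpace X]

theorem HHomogeneous.exists_hhomEmbedded [T2Space X] [SecondCountableTopology X] [Nontrivial X]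
    (hX : ZeroDimensional X) (h : HHomogeneous (ℕ → X)) :
    ∃ S : Set (ℕ → Bool), Nonempty ((ℕ → X) ≃ₜ S) ∧ HHomEmbedded S := by
  have hBool : ZeroDimensional Bool := .of_discreteTopology
  obtain ⟨ι, hι, hιd⟩ :=
    (ZeroDimensional.pi fun _ : ℕ => hX).exists_isEmbedding_denseRange not_isOpen_singleton_seq
  let j : Unit ⊕ (ℕ → X) → Unit ⊕ (ℕ → Bool) := Sum.map id ι
  have hj : IsEmbedding j := isEmbedding_sumMap .id hι
  have hemb : HHomEmbedded (univ.pi fun _ : ℕ => range j) :=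
    (ZeroDimensional.pi fun _ : ℕ => hBool).unit_sum.hhomEmbedded_pi
      (denseRange_sumMap denseRange_id hιd) isOpen_singleton_inl ⟨Sum.inl (), rfl⟩
  rw [← range_piMap] at hemb
  obtain ⟨η⟩ := h.nonempty_seq_unit_sum_homeomorph hX
  obtain ⟨θ⟩ := (hBool.hhomogeneous_seq (isOpen_discrete {true})).nonempty_seq_unit_sum_homeomorph
    hBool
  exact ⟨_, ⟨η.symm.trans ((IsEmbedding.piMap fun _ => hj).toHomeomorph.trans (θ.image _))⟩,
    hemb.image θ⟩

theorem HHomEmbedded.hhomogeneous_seq [Nontrivial X] {S : Set (ℕ → Bool)} (hS : HHomEmbedded S)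
    (θ : (ℕ → X) ≃ₜ S) : HHomogeneous (ℕ → X) := by
  obtain ⟨f⟩ : Nonempty (ℕ → X) := inferInstance
  have hzd : ZeroDimensional S :=
    .of_isInducing .subtypeVal (.pi fun _ => .of_discreteTopology)
  have hf : ¬IsOpen {θ f} := by
    rw [← image_singleton, θ.isOpen_image]
    exact not_isOpen_singleton_seq f
  exact (hS.univ_subtype.hhomogeneous hzd hf).of_homeomorph θ.symm

theorem hhomogeneous_seq_of_homeomorph [Nontrivial X] (hX : ZeroDimensional X) {Y : Type*}
    [TopologicalSpace Y] [T2Space Y] [FirstCountableTopology Y] {y : Y} (hy : IsOpen {y})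
    (θ : (ℕ → X) ≃ₜ (ℕ → Y)) : HHomogeneous (ℕ → X) := by
  have hconst : IsEmbedding fun (y : Y) (_ : ℕ) => y :=
    Function.LeftInverse.isEmbedding (f := fun f : ℕ → Y => f 0) (fun _ => rfl)
      (continuous_apply 0) (continuous_pi fun _ => continuous_id)
  have hY : ZeroDimensional Y :=
    .of_isInducing (θ.symm.isEmbedding.comp hconst).isInducing (.pi fun _ => hX)
  have : Nontrivial Y := not_subsingleton_iff_nontrivial.1 fun _ =>
    not_subsingleton (ℕ → X) θ.injective.subsingleton
  exact (hY.hhomogeneous_seq hy).of_homeomorph θ.symm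

end Equivalence

/-- Let `X` be a zero-dimensional separable metrizable space with at least two
points. Then the following are equivalent: (1) `X^ω` is homeomorphic to `Y^ω`
for some separable metrizable space `Y` having at least one isolated point;
(2) `X^ω` can be h-homogeneously embedded in the Cantor set `2^ω`;
(3) `X^ω` is h-homogeneous. -/
theorem statement15 {X : Type u} [TopologicalSpace X] [TopologicalSpace.SeparableSpace X]
    [TopologicalSpace.MetrizableSpace X] (hzd : ZeroDimensional X) (h2 : Nontrivial X) :
    ((∃ (Y : Type u) (tY : TopologicalSpace Y),
        @TopologicalSpace.SeparableSpace Y tY ∧ @TopologicalSpace.MetrizableSpace Y tY ∧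
        (∃ y : Y, @IsOpen Y tY {y}) ∧
        Nonempty (@Homeomorph (ℕ → X) (ℕ → Y) inferInstance
          (@Pi.topologicalSpace ℕ (fun _ => Y) (fun _ => tY)))) ↔
      (∃ S : Set (ℕ → Bool), Nonempty ((ℕ → X) ≃ₜ S) ∧ HHomEmbedded S)) ∧
    ((∃ S : Set (ℕ → Bool), Nonempty ((ℕ → X) ≃ₜ S) ∧ HHomEmbedded S) ↔
      HHomogeneous (ℕ → X)) := by
  let := TopologicalSpace.metrizableSpaceMetric X
  have := UniformSpace.secondCountable_of_separable X
  have h23 : (∃ S : Set (ℕ → Bool), Nonempty ((ℕ → X) ≃ₜ S) ∧ HHomEmbedded S) →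
      HHomogeneous (ℕ → X) := fun ⟨_, ⟨θ⟩, hS⟩ => hS.hhomogeneous_seq θ
  refine ⟨⟨?_, fun hS => ?_⟩, h23, (·.exists_hhomEmbedded hzd)⟩
  · rintro ⟨Y, _, _, _, ⟨y, hy⟩, ⟨θ⟩⟩
    exact (hhomogeneous_seq_of_homeomorph hzd hy θ).exists_hhomEmbedded hzd
  · obtain ⟨η⟩ := (h23 hS).nonempty_seq_unit_sum_homeomorph hzd
    exact ⟨Unit ⊕ (ℕ → X), inferInstance, inferInstance, inferInstance,
      ⟨_, isOpen_singleton_inl⟩, ⟨η.symm⟩⟩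
end
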